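/- arXiv:1009.5375 — 5 statements merged into one kernel-verified Lean document; each statement's English description precedes it below -/
import Mathlib

section
/- The infinite series ∑_{k=1}^∞ 2^k · H_{k-1}^{(2)} / (k · C(2k,k)) converges and equals π³/48, where C(2k,k) denotes the central binomial coefficient. -/
/-- `H2 n` is the second-order harmonic number `∑_{k=1}^n 1/k²`. -/
def H2 (n : ℕ) : ℚ := ∑ k ∈ Finset.Icc 1 n, (1 : ℚ) / k ^ 2

theorem H2_succ_real (n : ℕ) : ((H2 (n + 1) : ℚ) : ℝ) = (H2 n : ℝ) + 1 / ((n : ℝ) + 1) ^ 2 := by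
  unfold H2
  rw [Finset.sum_Icc_succ_top (by omega)]
  push_cast
  ring

theorem H2_zero_real : ((H2 0 : ℚ) : ℝ) = 0 := by
  simp [H2]

theorem H2_nonneg_real (n : ℕ) : 0 ≤ ((H2 n : ℚ) : ℝ) := by
  induction n with
  | zero => rw [H2_zero_real]
  | succ k ih => rw [H2_succ_real]; positivity

theorem H2_le_real (n : ℕ) : ((H2 n : ℚ) : ℝ) ≤ n := by
  induction n with
  | zero => rw [H2_zero_real]; simp
  | succ k ih =>
    rw [H2_succ_real]
    push_cast
    have : 1 / ((k : ℝ) + 1) ^ 2 ≤ 1 := by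
      rw [div_le_one (by positivity)]
      nlinarith [(Nat.cast_nonneg k : (0:ℝ) ≤ k)]
    linarith

/-- `v n = 4^(n+1) / C(2n,n)`. -/
noncomputable def vv (n : ℕ) : ℝ := 4 ^ (n + 1) / (Nat.centralBinom n : ℝ)

theorem vv_nonneg (n : ℕ) : 0 ≤ vv n := by unfold vv; positivity

theorem vv_succ (n : ℕ) : vv n = vv (n + 1) * (2 * n + 1) / (2 * (n + 1)) := by
  unfold vv
  have h := Nat.succ_mul_centralBinom_succ n
  have h' : ((n : ℝ) + 1) * (Nat.centralBinom (n + 1) : ℝ)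
      = 2 * (2 * n + 1) * (Nat.centralBinom n : ℝ) := by exact_mod_cast h
  have h1 : (Nat.centralBinom n : ℝ) ≠ 0 := by exact_mod_cast Nat.centralBinom_ne_zero n
  have h2 : (Nat.centralBinom (n + 1) : ℝ) ≠ 0 := by
    exact_mod_cast Nat.centralBinom_ne_zero (n + 1)
  have h3 : (n : ℝ) + 1 ≠ 0 := by positivity
  rw [div_mul_eq_mul_div, div_div, div_eq_div_iff h1 (by positivity)]
  rw [pow_succ 4 (n + 1)]
  linear_combination (2 * (4 : ℝ) ^ (n + 1)) * h'

noncomputable def GG (N : ℕ) (t : ℝ) : ℝ :=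
  ∑ n ∈ Finset.range N, vv (n + 1) / (4 * ((n : ℝ) + 1) ^ 2) * Real.sin t ^ (2 * n + 2)

noncomputable def GD (N : ℕ) (t : ℝ) : ℝ :=
  ∑ n ∈ Finset.range N, vv (n + 1) / (2 * ((n : ℝ) + 1)) * (Real.sin t ^ (2 * n + 1) * Real.cos t)

noncomputable def FD (N : ℕ) (t : ℝ) : ℝ :=
  ∑ n ∈ Finset.range N, (H2 n : ℝ) * (vv (n + 1) / (2 * ((n : ℝ) + 1)) *
    (Real.sin t ^ (2 * n + 1) * Real.cos t))

theorem hasDerivAt_GG (N : ℕ) (t : ℝ) : HasDerivAt (GG N) (GD N t) t := by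
  unfold GG GD
  apply HasDerivAt.fun_sum
  intro n _
  have h := ((Real.hasDerivAt_sin t).fun_pow (2 * n + 2)).const_mul
    (vv (n + 1) / (4 * ((n : ℝ) + 1) ^ 2))
  refine h.congr_deriv ?_
  have h3 : (n : ℝ) + 1 ≠ 0 := by positivity
  rw [show 2 * n + 2 - 1 = 2 * n + 1 by omega]
  push_cast
  field_simp
  ring

theorem hasDerivAt_term (n : ℕ) (t : ℝ) :
    HasDerivAt (fun t => vv (n + 1) / (2 * ((n : ℝ) + 1)) * (Real.sin t ^ (2 * n + 1) * Real.cos t))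
      (vv n * Real.sin t ^ (2 * n) - vv (n + 1) * Real.sin t ^ (2 * (n + 1))) t := by
  have h := (((Real.hasDerivAt_sin t).fun_pow (2 * n + 1)).fun_mul
    (Real.hasDerivAt_cos t)).const_mul (vv (n + 1) / (2 * ((n : ℝ) + 1)))
  refine h.congr_deriv ?_
  have h3 : (n : ℝ) + 1 ≠ 0 := by positivity
  rw [show 2 * n + 1 - 1 = 2 * n by omega, vv_succ n]
  have hc : Real.cos t * Real.cos t = 1 - Real.sin t ^ 2 := by
    have := Real.sin_sq_add_cos_sq t
    linarith
  rw [mul_assoc _ (Real.cos t) (Real.cos t), hc]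
  push_cast
  field_simp
  ring

theorem hasDerivAt_GD (N : ℕ) (t : ℝ) :
    HasDerivAt (GD N) (4 - vv N * Real.sin t ^ (2 * N)) t := by
  have h : HasDerivAt (GD N) (∑ n ∈ Finset.range N,
      (vv n * Real.sin t ^ (2 * n) - vv (n + 1) * Real.sin t ^ (2 * (n + 1)))) t := by
    unfold GD
    exact HasDerivAt.fun_sum fun n _ => hasDerivAt_term n t
  refine h.congr_deriv ?_
  rw [Finset.sum_range_sub' (fun n => vv n * Real.sin t ^ (2 * n))]
  simp [vv]

theorem hasDerivAt_FD (N : ℕ) (t : ℝ) :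
    HasDerivAt (FD N) (4 * GG N t - (H2 N : ℝ) * vv N * Real.sin t ^ (2 * N)) t := by
  have h : HasDerivAt (FD N) (∑ n ∈ Finset.range N, (H2 n : ℝ) *
      (vv n * Real.sin t ^ (2 * n) - vv (n + 1) * Real.sin t ^ (2 * (n + 1)))) t := by
    unfold FD
    exact HasDerivAt.fun_sum fun n _ => (hasDerivAt_term n t).const_mul _
  refine h.congr_deriv ?_
  unfold GG
  induction N with
  | zero => simp [H2_zero_real]
  | succ k ih =>
    have hk := ih (by
      unfold FD
      exact HasDerivAt.fun_sum fun n _ => (hasDerivAt_term n t).const_mul _)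
    rw [Finset.sum_range_succ, Finset.sum_range_succ, hk, H2_succ_real]
    have h3 : (k : ℝ) + 1 ≠ 0 := by positivity
    field_simp
    ring

/-- A function vanishing at `0` with derivative bounded by `C` is bounded by `C` on `[0, π/4]`. -/
theorem bound_of_deriv (f f' : ℝ → ℝ) (C : ℝ) (hC : 0 ≤ C) (h0 : f 0 = 0)
    (hd : ∀ t, HasDerivAt f (f' t) t) (hb : ∀ t ∈ Set.Icc 0 (Real.pi / 4), |f' t| ≤ C) :
    ∀ t ∈ Set.Icc 0 (Real.pi / 4), |f t| ≤ C := by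
  intro t ht
  have h := norm_image_sub_le_of_norm_deriv_le_segment' (f := f) (f' := f') (C := C)
    (a := 0) (b := Real.pi / 4) (fun x _ => (hd x).hasDerivWithinAt)
    (fun x hx => by rw [Real.norm_eq_abs]; exact hb x ⟨hx.1, hx.2.le⟩) t ht
  rw [h0, sub_zero, sub_zero, Real.norm_eq_abs] at h
  have : t ≤ 1 := by have := ht.2; have := Real.pi_le_four; linarith
  nlinarith

theorem sin_pow_le (N : ℕ) (t : ℝ) (ht : t ∈ Set.Icc 0 (Real.pi / 4)) :
    0 ≤ Real.sin t ^ (2 * N) ∧ Real.sin t ^ (2 * N) ≤ (1 / 2) ^ N := by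
  have hp := Real.pi_pos
  have h0 : 0 ≤ Real.sin t := Real.sin_nonneg_of_nonneg_of_le_pi ht.1 (by linarith [ht.2])
  have h1 : Real.sin t ≤ Real.sin (Real.pi / 4) :=
    Real.sin_le_sin_of_le_of_le_pi_div_two (by linarith [ht.1]) (by linarith) ht.2
  have h2 : Real.sin t ^ 2 ≤ 1 / 2 := by
    calc Real.sin t ^ 2 ≤ Real.sin (Real.pi / 4) ^ 2 := by gcongr
      _ = 1 / 2 := by
        rw [Real.sin_pi_div_four, div_pow, Real.sq_sqrt (by norm_num)]; norm_num
  refine ⟨by positivity, ?_⟩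
  rw [pow_mul]
  gcongr

theorem FD_bound (N : ℕ) (e : ℝ) (he : ((H2 N : ℝ) + 1) * vv N * (1 / 2) ^ N ≤ e) :
    |FD N (Real.pi / 4) - Real.pi ^ 3 / 24| ≤ 5 * e := by
  have hH := H2_nonneg_real N
  have hv := vv_nonneg N
  have he0 : 0 ≤ e := le_trans (by positivity) he
  have hp := Real.pi_pos
  have e1 : vv N * (1 / 2) ^ N ≤ e := by
    have : 0 ≤ (H2 N : ℝ) * (vv N * (1 / 2) ^ N) := by positivity
    linarith
  have e2 : (H2 N : ℝ) * vv N * (1 / 2) ^ N ≤ e := by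
    have : 0 ≤ (vv N * (1 / 2) ^ N) := by positivity
    linarith
  have b1 := bound_of_deriv (fun t => GD N t - 4 * t) (fun t => 4 - vv N * Real.sin t ^ (2 * N) - 4)
    e he0 (by simp [GD]) (fun t => by
      simpa using (hasDerivAt_GD N t).fun_sub ((hasDerivAt_id t).const_mul 4))
    (fun t ht => by
      obtain ⟨s0, s1⟩ := sin_pow_le N t ht
      have := mul_le_mul_of_nonneg_left s1 hv
      have := mul_nonneg hv s0
      rw [abs_le]; constructor <;> linarith)
  have b2 := bound_of_deriv (fun t => GG N t - 2 * t ^ 2) (fun t => GD N t - 4 * t)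
    e he0 (by simp [GG]) (fun t => by
      refine ((hasDerivAt_GG N t).fun_sub ((hasDerivAt_pow 2 t).const_mul 2)).congr_deriv ?_
      norm_num
      ring) b1
  have b3 := bound_of_deriv (fun t => FD N t - 8 / 3 * t ^ 3)
    (fun t => 4 * GG N t - (H2 N : ℝ) * vv N * Real.sin t ^ (2 * N) - 8 * t ^ 2)
    (5 * e) (by positivity) (by simp [FD]) (fun t => by
      refine ((hasDerivAt_FD N t).fun_sub ((hasDerivAt_pow 3 t).const_mul (8 / 3))).congr_deriv ?_
      norm_num
      ring)
    (fun t ht => by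
      obtain ⟨s0, s1⟩ := sin_pow_le N t ht
      have hvv : 0 ≤ (H2 N : ℝ) * vv N := by positivity
      have := mul_le_mul_of_nonneg_left s1 hvv
      have := mul_nonneg hvv s0
      have h2 := abs_le.1 (b2 t ht)
      rw [abs_le]; constructor <;> linarith [h2.1, h2.2])
  have := b3 (Real.pi / 4) ⟨by positivity, le_rfl⟩
  convert this using 2
  ring

theorem err_bound (N : ℕ) :
    ((H2 N : ℝ) + 1) * vv N * (1 / 2) ^ N ≤ 8 * ((N : ℝ) ^ 2 * (1 / 2) ^ N +
      (N : ℝ) ^ 1 * (1 / 2) ^ N) + (if N = 0 then 4 else 0) := by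
  rcases Nat.eq_zero_or_pos N with rfl | hN
  · simp [H2_zero_real, vv]
  · have h := Nat.four_pow_le_two_mul_self_mul_centralBinom N hN
    have h' : (4 : ℝ) ^ N ≤ 2 * N * (Nat.centralBinom N : ℝ) := by exact_mod_cast h
    have hc : (0 : ℝ) < Nat.centralBinom N := by exact_mod_cast Nat.centralBinom_pos N
    have hv : vv N ≤ 8 * N := by
      unfold vv
      rw [div_le_iff₀ hc, pow_succ]
      linarith
    have hH := H2_le_real N
    have hv0 := vv_nonneg N
    have h1 : ((H2 N : ℝ) + 1) * vv N ≤ ((N : ℝ) + 1) * (8 * N) := by gcongr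
    have h2 := mul_le_mul_of_nonneg_right h1 (by positivity : (0 : ℝ) ≤ (1 / 2) ^ N)
    rw [if_neg hN.ne']
    refine h2.trans (le_of_eq ?_)
    ring

theorem FD_tendsto : Filter.Tendsto (fun N => FD N (Real.pi / 4)) Filter.atTop
    (nhds (Real.pi ^ 3 / 24)) := by
  have t1 := tendsto_pow_const_mul_const_pow_of_lt_one 2 (r := (1 / 2 : ℝ))
    (by norm_num) (by norm_num)
  have t2 := tendsto_pow_const_mul_const_pow_of_lt_one 1 (r := (1 / 2 : ℝ))
    (by norm_num) (by norm_num)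
  have t3 : Filter.Tendsto (fun N : ℕ => (if N = 0 then 4 else 0 : ℝ)) Filter.atTop (nhds 0) := by
    apply tendsto_const_nhds.congr'
    filter_upwards [Filter.eventually_gt_atTop 0] with N hN
    rw [if_neg hN.ne']
  have t4 := (((t1.add t2).const_mul 8).add t3).const_mul 5
  rw [tendsto_iff_norm_sub_tendsto_zero]
  refine squeeze_zero (fun _ => norm_nonneg _)
    (fun N => (Real.norm_eq_abs _).trans_le (FD_bound N _ (err_bound N))) ?_
  simpa using t4

/-- The series `∑_{k=1}^∞ 2^k H_{k-1}^{(2)} / (k C(2k,k))` converges with sum `π³/48`. -/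
theorem sum_two_pow_harmonic2_div_centralBinom :
    HasSum (fun n : ℕ =>
        (2 : ℝ) ^ (n + 1) * (H2 n : ℝ) / ((n + 1) * ((2 * (n + 1)).choose (n + 1))))
      (Real.pi ^ 3 / 48) := by
  rw [hasSum_iff_tendsto_nat_of_nonneg (fun n => by
    have := H2_nonneg_real n
    positivity)]
  have h := FD_tendsto.const_mul (1 / 2)
  rw [show (1 / 2 : ℝ) * (Real.pi ^ 3 / 24) = Real.pi ^ 3 / 48 by ring] at h
  refine h.congr fun N => ?_
  unfold FD
  rw [Finset.mul_sum]
  refine Finset.sum_congr rfl fun n _ => ?_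
  have hs : Real.sin (Real.pi / 4) ^ (2 * n + 1) * Real.cos (Real.pi / 4) = (1 / 2) ^ (n + 1) := by
    rw [Real.cos_pi_div_four, ← Real.sin_pi_div_four, ← pow_succ,
      show 2 * n + 1 + 1 = 2 * (n + 1) by ring, pow_mul, Real.sin_pi_div_four, div_pow,
      Real.sq_sqrt (by norm_num)]
    norm_num
  rw [hs, vv, Nat.centralBinom]
  have hc : ((2 * (n + 1)).choose (n + 1) : ℝ) ≠ 0 := by
    exact_mod_cast Nat.centralBinom_ne_zero (n + 1)
  have h3 : (n : ℝ) + 1 ≠ 0 := by positivity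
  have h4 : (4 : ℝ) ^ (n + 1 + 1) * (1 / 2) ^ (n + 1) = 4 * 2 ^ (n + 1) := by
    rw [pow_succ, mul_right_comm, ← mul_pow]
    norm_num
    ring
  calc _ = (1 / 4) * (H2 n : ℝ) * ((4 : ℝ) ^ (n + 1 + 1) * (1 / 2) ^ (n + 1)) /
        ((n + 1) * ((2 * (n + 1)).choose (n + 1))) := by
        field_simp
        try ring
    _ = _ := by rw [h4]; ring
end

section
/- Let p > 3 be a prime. Then ∑_{k=0}^{p-1} (C(2k,k)/2^k) · H_k^{(2)} ≡ -E_{p-3} (mod p), as a congruence of rational numbers whose denominators are coprime to p. -/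
/-- `H n` is the harmonic number `∑_{k=1}^n 1/k`. -/
def H (n : ℕ) : ℚ := ∑ k ∈ Finset.Icc 1 n, (1 : ℚ) / k

/-- The Euler numbers: `E 0 = 1` and `∑_{0 ≤ k ≤ n, k even} C(n,k) E_{n-k} = 0` for `n ≥ 1`. -/
def eulerNumber : ℕ → ℚ
  | 0 => 1
  | n + 1 =>
      -∑ j ∈ (Finset.range (n + 1)).attach,
        if Even (n + 1 - j.1) then ((n + 1).choose (n + 1 - j.1) : ℚ) * eulerNumber j.1 else 0
decreasing_by exact Finset.mem_range.mp j.2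

/-- For rationals, `a ≡ b (mod m)` : `m` divides the numerator of `a - b` in lowest terms. -/
def ratModEq (m : ℕ) (a b : ℚ) : Prop := (m : ℤ) ∣ (a - b).num


open Polynomial in
lemma poly_zero {K : Type*} [Field K] (p : ℕ) [Fact p.Prime] [CharP K p] (D : K[X])
    (hd : D.natDegree ≤ p) (hq : derivative D = 0) (h0 : D.eval 0 = 0) (h1 : D.eval 1 = 0) :
    D = 0 := by
  have hp : p.Prime := Fact.out
  have hc : ∀ k, k ≠ 0 → k ≠ p → D.coeff k = 0 := by
    intro k hk hkp
    rcases lt_or_ge p k with h | h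
    · exact coeff_eq_zero_of_natDegree_lt (by omega)
    · have := congrArg (fun q => q.coeff (k - 1)) hq
      simp only [coeff_derivative, coeff_zero] at this
      rw [Nat.sub_add_cancel (by omega)] at this
      rcases mul_eq_zero.1 this with h2 | h2
      · exact h2
      · exfalso
        have h3 : ((k : ℕ) : K) = 0 := by
          rw [← h2]; conv_lhs => rw [← Nat.sub_add_cancel (show 1 ≤ k by omega)]
          push_cast; rfl
        rw [CharP.cast_eq_zero_iff K p] at h3
        have := Nat.le_of_dvd (by omega) h3
        omega
  have hz : D.coeff 0 = 0 := by rw [coeff_zero_eq_eval_zero]; exact h0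
  have hD : D = C (D.coeff p) * X ^ p := by
    ext k
    rw [coeff_C_mul, coeff_X_pow]
    split_ifs with h
    · rw [h]; simp
    · rcases eq_or_ne k 0 with rfl | hk
      · simp [hz]
      · simp [hc k hk h]
  rw [hD] at h1
  simp at h1
  rw [hD, h1]; simp

lemma cb_rec {K : Type*} [Field K] (n p : ℕ) (hn : p = 2 * n + 1) [CharP K p] (k : ℕ) :
    ((k : K) + 1) * ((n.choose (k + 1) : K) * (-4) ^ (k + 1)) =
      (2 + 4 * k) * ((n.choose k : K) * (-4) ^ k) := by
  have h2 : (2 : K) * n + 1 = 0 := by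
    have := CharP.cast_eq_zero K p
    rw [hn] at this; push_cast at this; exact this
  have h : (n.choose (k + 1) : K) * (k + 1) = n.choose k * (n - k) := by
    rcases le_or_gt k n with hk | hk
    · have := Nat.choose_succ_right_eq n k
      have h3 := congrArg (Nat.cast : ℕ → K) this
      push_cast [Nat.cast_sub hk] at h3
      exact h3
    · rw [Nat.choose_eq_zero_of_lt hk, Nat.choose_eq_zero_of_lt (by omega)]; simp
  rw [pow_succ]
  linear_combination (-4) ^ k * (-4) * h - 2 * (n.choose k : K) * (-4) ^ k * h2

lemma cb_eq {K : Type*} [Field K] (n p : ℕ) (hn : p = 2 * n + 1) [Fact p.Prime] [CharP K p] (k : ℕ)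
    (hk : k < p) : ((2 * k).choose k : K) = (n.choose k : K) * (-4) ^ k := by
  induction k with
  | zero => simp
  | succ k ih =>
    have h := ih (by omega)
    have h1 := cb_rec (K := K) n p hn k
    have h2 := Nat.succ_mul_centralBinom_succ k
    simp only [Nat.centralBinom] at h2
    have h3 := congrArg (Nat.cast : ℕ → K) h2
    push_cast at h3
    have hne : ((k : K) + 1) ≠ 0 := by
      intro h0
      have : ((k + 1 : ℕ) : K) = 0 := by push_cast; exact h0
      rw [CharP.cast_eq_zero_iff K p] at this
      have := Nat.le_of_dvd (by omega) this
      omega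
    apply mul_left_cancel₀ hne
    rw [h1, h3, h]; ring

section
open Polynomial Finset

variable {K : Type*} [Field K]

lemma Phi1_eq (n p : ℕ) (hn : p = 2 * n + 1) [Fact p.Prime] [CharP K p] :
    ∑ k ∈ range (n + 1), C ((n.choose k : K) * (-4) ^ k / k) * (X * (1 - X)) ^ k =
      ∑ k ∈ Ico 1 p, C (-2 / (k : K)) * (X ^ (p - k) * (X - 1) ^ k) := by
  have hp : p.Prime := Fact.out
  have hne : ∀ k, 1 ≤ k → k < p → (k : K) ≠ 0 := by
    intro k h1 h2 h0
    rw [CharP.cast_eq_zero_iff K p] at h0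
    have := Nat.le_of_dvd (by omega) h0
    omega
  have ht : (X * (1 - X) : K[X]) ≠ 0 := by
    apply mul_ne_zero X_ne_zero
    intro h
    have := congrArg (eval 0) h
    simp at this
  have hpc : (p : K[X]) = 0 := CharP.cast_eq_zero _ p
  rw [← sub_eq_zero]
  apply poly_zero p
  · apply (natDegree_sub_le _ _).trans
    apply max_le
    · apply natDegree_sum_le_of_forall_le
      intro k hk
      have := mem_range.1 hk
      have h2 : (X * (1 - X) : K[X]).natDegree ≤ 2 := by compute_degree
      have h3 := natDegree_pow_le_of_le k h2
      refine (natDegree_C_mul_le _ _).trans (h3.trans (by omega))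
    · apply natDegree_sum_le_of_forall_le
      intro k hk
      have := mem_Ico.1 hk
      have h2 : (X - 1 : K[X]).natDegree ≤ 1 := by compute_degree
      have h3 := natDegree_pow_le_of_le k h2
      refine (natDegree_C_mul_le _ _).trans (natDegree_mul_le.trans ?_)
      rw [natDegree_X_pow]; omega
  · rw [derivative_sub, sub_eq_zero]
    apply mul_left_cancel₀ ht
    trans 2 * (X - X ^ p)
    · have h0 : (1 - 2 * X) * ∑ k ∈ range (n + 1), C ((n.choose k : K) * (-4) ^ k) * (X * (1 - X)) ^ k
          = 1 - 2 * X ^ p := by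
        have : ∑ k ∈ range (n + 1), C ((n.choose k : K) * (-4) ^ k) * (X * (1 - X)) ^ k
          = (1 - 2 * X : K[X]) ^ (2 * n) := by
          rw [pow_mul, show (1 - 2 * X : K[X]) ^ 2 = (-4) * (X * (1 - X)) + 1 by ring, add_pow]
          apply sum_congr rfl
          intro k _
          rw [mul_pow, one_pow, C_mul, C_pow, C_neg, C_ofNat, C_eq_natCast, mul_pow (-4 : K[X]), mul_pow X]; ring
        rw [this, ← pow_succ', ← hn, sub_pow_char, mul_pow, one_pow]
        have : (2 : K[X]) ^ p = 2 := by
          have := map_ofNat (frobenius K[X] p) 2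
          simpa [frobenius_def] using this
        rw [this]
      rw [derivative_sum, mul_sum]
      have : ∀ k ∈ range (n + 1), X * (1 - X) * derivative (C ((n.choose k : K) * (-4) ^ k / k) * (X * (1 - X)) ^ k) = (1 - 2 * X) * (C ((n.choose k : K) * (-4) ^ k) * (X * (1 - X)) ^ k) - if k = 0 then (1 - 2 * X) else 0 := by
        intro k hk
        have := mem_range.1 hk
        rcases k with _ | k
        · simp
        · have hk0 := hne (k + 1) (by omega) (by omega)
          have : C ((n.choose (k + 1) : K) * (-4) ^ (k + 1)) = C ((n.choose (k + 1) : K) * (-4) ^ (k + 1) / ((k + 1 : ℕ) : K)) * (((k + 1 : ℕ) : K[X])) := by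
            rw [← C_eq_natCast, ← C_mul, div_mul_cancel₀ _ hk0]
          rw [this, derivative_C_mul, derivative_pow]
          simp only [derivative_mul, derivative_X, derivative_sub, derivative_one, C_eq_natCast, Nat.add_sub_cancel, if_neg (Nat.succ_ne_zero k)]
          ring
      rw [sum_congr rfl this, sum_sub_distrib, ← mul_sum, h0]
      simp
      ring
    · rw [derivative_sum]
      have : ∀ k ∈ Ico 1 p, derivative (C (-2 / (k : K)) * (X ^ (p - k) * (X - 1) ^ k)) = -2 * (X ^ (p - 1 - k) * (X - 1) ^ (k - 1)) := by
        intro k hk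
        have hk := mem_Ico.1 hk
        obtain ⟨j, rfl⟩ : ∃ j, k = j + 1 := ⟨k - 1, by omega⟩
        obtain ⟨m, rfl⟩ : ∃ m, p = j + 1 + m + 1 := ⟨p - (j + 1) - 1, by omega⟩
        have hk0 := hne (j + 1) (by omega) (by omega)
        have e : (-2 : K[X]) = C (-2 / ((j + 1 : ℕ) : K)) * (((j + 1 : ℕ) : K[X])) := by
          rw [← C_eq_natCast, ← C_mul, div_mul_cancel₀ _ hk0]; simp [C_ofNat]
        have h1 : j + 1 + m + 1 - (j + 1) = m + 1 := by omega
        have h2 : j + 1 + m + 1 - 1 - (j + 1) = m := by omega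
        rw [h1, h2, e]
        simp only [derivative_C, derivative_mul, derivative_pow, derivative_X, derivative_sub, derivative_one, C_eq_natCast, Nat.add_sub_cancel]
        push_cast at hpc ⊢
        linear_combination C (-2 / ((j : K) + 1)) * X ^ m * (X - 1) ^ (j + 1) * hpc
      rw [sum_congr rfl this, ← mul_sum]
      have hg : ∑ k ∈ Ico 1 p, (X ^ (p - 1 - k) * (X - 1) ^ (k - 1)) = X ^ (p - 1) - (X - 1 : K[X]) ^ (p - 1) := by
        have h := (Commute.all (X - 1 : K[X]) X).geom_sum₂_mul (p - 1)
        rw [sum_Ico_eq_sum_range]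
        have : ∀ i, (X ^ (p - 1 - (1 + i)) * (X - 1) ^ (1 + i - 1) : K[X]) = (X - 1) ^ i * X ^ (p - 1 - 1 - i) := by
          intro i
          rw [mul_comm, Nat.add_sub_cancel_left, Nat.sub_sub (p - 1) 1 i]
        simp only [this]
        linear_combination -h
      rw [hg]
      have h1 : (X : K[X]) ^ (p - 1) * X = X ^ p := by rw [← pow_succ, Nat.sub_add_cancel hp.one_le]
      have h2 : (X - 1 : K[X]) ^ (p - 1) * (X - 1) = X ^ p - 1 := by
        rw [← pow_succ, Nat.sub_add_cancel hp.one_le, sub_pow_char, one_pow]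
      linear_combination 2 * (1 - X) * h1 + 2 * X * h2
  · rw [eval_sub, eval_finsetSum, eval_finsetSum, sum_eq_zero, sum_eq_zero, sub_zero]
    · intro k hk
      have hk := mem_Ico.1 hk
      simp; omega
    · intro k hk
      rcases k with _ | k <;> simp
  · rw [eval_sub, eval_finsetSum, eval_finsetSum, sum_eq_zero, sum_eq_zero, sub_zero]
    · intro k hk
      have hk := mem_Ico.1 hk
      simp; omega
    · intro k hk
      rcases k with _ | k <;> simp

lemma Psi_eq (n p : ℕ) (hn : p = 2 * n + 1) [Fact p.Prime] [CharP K p] :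
    (1 - 2 * X) * ∑ k ∈ range (n + 1), C ((n.choose k : K) * (-4) ^ k * ∑ j ∈ Icc 1 k, 1 / (j : K) ^ 2) * (X * (1 - X)) ^ k =
      ∑ k ∈ Ico 1 p, C (2 / (k : K) ^ 2) * (X ^ (p - k) * (X - 1) ^ k) := by
  have hp : p.Prime := Fact.out
  have hne : ∀ k, 1 ≤ k → k < p → (k : K) ≠ 0 := by
    intro k h1 h2 h0
    rw [CharP.cast_eq_zero_iff K p] at h0
    have := Nat.le_of_dvd (by omega) h0
    omega
  have ht : (X * (1 - X) : K[X]) ≠ 0 := by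
    apply mul_ne_zero X_ne_zero
    intro h
    have := congrArg (eval 0) h
    simp at this
  have hpc : (p : K[X]) = 0 := CharP.cast_eq_zero _ p
  rw [← sub_eq_zero]
  apply poly_zero p
  · apply (natDegree_sub_le _ _).trans
    apply max_le
    · have h1 : (1 - 2 * X : K[X]).natDegree ≤ 1 := by compute_degree
      refine natDegree_mul_le.trans ((add_le_add h1 (natDegree_sum_le_of_forall_le (n := 2 * n) _ _ ?_)).trans (by omega))
      intro k hk
      have := mem_range.1 hk
      have h2 : (X * (1 - X) : K[X]).natDegree ≤ 2 := by compute_degree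
      have h3 := natDegree_pow_le_of_le k h2
      refine (natDegree_C_mul_le _ _).trans (h3.trans (by omega))
    · apply natDegree_sum_le_of_forall_le
      intro k hk
      have := mem_Ico.1 hk
      have h2 : (X - 1 : K[X]).natDegree ≤ 1 := by compute_degree
      have h3 := natDegree_pow_le_of_le k h2
      refine (natDegree_C_mul_le _ _).trans (natDegree_mul_le.trans ?_)
      rw [natDegree_X_pow]; omega
  · rw [derivative_sub, sub_eq_zero]
    apply mul_left_cancel₀ ht
    trans ∑ k ∈ range (n + 1), C ((n.choose k : K) * (-4) ^ k / k) * (X * (1 - X)) ^ k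
    · set h : ℕ → K := fun k => ∑ j ∈ Icc 1 k, 1 / (j : K) ^ 2 with hh
      have hs : ∀ k, h (k + 1) = h k + 1 / ((k + 1 : ℕ) : K) ^ 2 := by
        intro k
        simp only [hh]
        rw [sum_Icc_succ_top (by omega)]
      set c : ℕ → K := fun k => (n.choose k : K) * (-4) ^ k with hcdef
      have hrec : ∀ k : ℕ, ((k : K) + 1) * c (k + 1) = (2 + 4 * k) * c k := fun k => cb_rec n p hn k
      have hcn : c (n + 1) = 0 := by simp [hcdef]
      change X * (1 - X) * derivative ((1 - 2 * X) * ∑ k ∈ range (n + 1), C (c k * h k) * (X * (1 - X)) ^ k) = ∑ k ∈ range (n + 1), C (c k / k) * (X * (1 - X)) ^ k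
      -- telescoping
      have key : ∀ N ≤ n + 1, X * (1 - X) * derivative ((1 - 2 * X) * ∑ k ∈ range N, C (c k * h k) * (X * (1 - X)) ^ k) = ∑ k ∈ range N, C (c k / k) * (X * (1 - X)) ^ k - C (N * c N * (h N - if N = 0 then 0 else 1 / (N : K) ^ 2)) * (X * (1 - X)) ^ N := by
        intro N
        induction N with
        | zero => intro _; simp
        | succ N ih =>
          intro hN
          rw [sum_range_succ, sum_range_succ, mul_add, derivative_add, mul_add, ih (by omega)]
          have e1 : h (N + 1) - (if N + 1 = 0 then 0 else 1 / ((N + 1 : ℕ) : K) ^ 2) = h N := by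
            rw [hs, if_neg (Nat.succ_ne_zero N)]; ring
          rw [e1]
          have e2 : ((N + 1 : ℕ) : K) * c (N + 1) = (2 + 4 * N) * c N := by push_cast; exact hrec N
          rw [e2]
          rcases N with _ | N
          · simp [hh]
          · have hk0 := hne (N + 1) (by omega) (by omega)
            rw [if_neg (Nat.succ_ne_zero N)]
            have e3 : c (N + 1) / ((N + 1 : ℕ) : K) = ((N + 1 : ℕ) : K) * c (N + 1) * (1 / ((N + 1 : ℕ) : K) ^ 2) := by
              field_simp
            rw [e3]
            simp only [mul_sub, C_sub, C_mul, C_add, derivative_mul, derivative_pow, derivative_X, derivative_sub, derivative_one, derivative_C, C_eq_natCast, Nat.add_sub_cancel, derivative_ofNat]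
            simp only [C_ofNat]
            ring
      rw [key (n + 1) le_rfl, hcn]
      simp
    · rw [Phi1_eq n p hn, derivative_sum, mul_sum]
      apply sum_congr rfl
      intro k hk
      have hk := mem_Ico.1 hk
      obtain ⟨j, rfl⟩ : ∃ j, k = j + 1 := ⟨k - 1, by omega⟩
      obtain ⟨m, rfl⟩ : ∃ m, p = j + 1 + m + 1 := ⟨p - (j + 1) - 1, by omega⟩
      have hk0 := hne (j + 1) (by omega) (by omega)
      have e : C (-2 / ((j + 1 : ℕ) : K)) = - C (2 / ((j + 1 : ℕ) : K) ^ 2) * (((j + 1 : ℕ) : K[X])) := by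
        rw [← C_eq_natCast, ← C_neg, ← C_mul]; congr 1; field_simp
      have h1 : j + 1 + m + 1 - (j + 1) = m + 1 := by omega
      rw [h1, e]
      simp only [derivative_C, derivative_mul, derivative_pow, derivative_X, derivative_sub, derivative_one, C_eq_natCast, Nat.add_sub_cancel]
      push_cast at hpc ⊢
      linear_combination -C (2 / ((j : K) + 1) ^ 2) * X * (1 - X) * X ^ m * (X - 1) ^ (j + 1) * hpc
  · rw [eval_sub, eval_mul, eval_finsetSum, eval_finsetSum, sum_eq_zero, sum_eq_zero, mul_zero, sub_zero]
    · intro k hk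
      have hk := mem_Ico.1 hk
      simp; omega
    · intro k hk
      rcases k with _ | k <;> simp
  · rw [eval_sub, eval_mul, eval_finsetSum, eval_finsetSum, sum_eq_zero, sum_eq_zero, mul_zero, sub_zero]
    · intro k hk
      have hk := mem_Ico.1 hk
      simp; omega
    · intro k hk
      rcases k with _ | k <;> simp
end

section
open Finset

lemma euler_rec (N : ℕ) (hN : N ≠ 0) :
    ∑ j ∈ range (N + 1), (if Even (N - j) then (N.choose j : ℚ) * eulerNumber j else 0) = 0 := by
  obtain ⟨n, rfl⟩ := Nat.exists_eq_succ_of_ne_zero hN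
  rw [sum_range_succ]
  have h : eulerNumber (n + 1) = -∑ j ∈ range (n + 1),
      (if Even (n + 1 - j) then ((n + 1).choose j : ℚ) * eulerNumber j else 0) := by
    rw [eulerNumber, sum_attach (range (n + 1)) (fun j => if Even (n + 1 - j) then ((n + 1).choose (n + 1 - j) : ℚ) * eulerNumber j else 0)]
    congr 1
    apply sum_congr rfl
    intro j hj
    rw [Nat.choose_symm (by have := mem_range.1 hj; omega)]
  simp only [Nat.succ_eq_add_one, Nat.sub_self, Nat.choose_self]
  rw [if_pos (by simp), h]
  simp

lemma euler_int (N : ℕ) : ∃ z : ℤ, eulerNumber N = z := by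
  induction N using Nat.strong_induction_on with
  | _ N ih =>
    rcases N with _ | n
    · exact ⟨1, by simp [eulerNumber]⟩
    · have h := euler_rec (n + 1) (by simp)
      rw [sum_range_succ] at h
      simp only [Nat.sub_self, Nat.choose_self] at h
      rw [if_pos (by simp)] at h
      have : ∀ j : ℕ, ∃ z : ℤ, j < n + 1 → eulerNumber j = z := by
        intro j
        by_cases hj : j < n + 1
        · obtain ⟨z, hz⟩ := ih j hj
          exact ⟨z, fun _ => hz⟩
        · exact ⟨0, fun h => absurd h hj⟩
      choose z hz using this
      refine ⟨-∑ j ∈ range (n + 1), (if Even (n + 1 - j) then ((n + 1).choose j : ℤ) * z j else 0), ?_⟩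
      push_cast
      have h3 : ∑ j ∈ range (n + 1), (if Even (n + 1 - j) then ((n + 1).choose j : ℚ) * (z j : ℚ) else 0) =
          ∑ j ∈ range (n + 1), (if Even (n + 1 - j) then ((n + 1).choose j : ℚ) * eulerNumber j else 0) := by
        apply sum_congr rfl
        intro j hj
        rw [hz j (mem_range.1 hj)]
      rw [h3]
      push_cast at h
      linear_combination h

lemma euler_odd (N : ℕ) (h : Odd N) : eulerNumber N = 0 := by
  induction N using Nat.strong_induction_on with
  | _ N ih =>
    have hN : N ≠ 0 := by rintro rfl; simp at h
    have h1 := euler_rec N hN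
    rw [sum_range_succ, sum_eq_zero] at h1
    · simpa using h1
    · intro j hj
      have hj := mem_range.1 hj
      split_ifs with he
      · have : Odd j := by
          rw [Nat.odd_iff] at *; rw [Nat.even_iff] at he; omega
        rw [ih j hj this, mul_zero]
      · rfl

variable {K : Type*} [Field K]

/-- Umbral polynomial `(E + x)^m`. -/
def eulP (e : ℕ → K) (m : ℕ) (x : K) : K := ∑ j ∈ range (m + 1), (m.choose j : K) * e j * x ^ (m - j)

lemma eulP_add (e : ℕ → K) (m : ℕ) (x y : K) :
    eulP e m (x + y) = ∑ l ∈ range (m + 1), (m.choose l : K) * x ^ (m - l) * eulP e l y := by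
  unfold eulP
  simp only [mul_sum]
  have h1 : ∀ j ∈ range (m + 1), (m.choose j : K) * e j * (x + y) ^ (m - j) =
      ∑ l ∈ Ico j (m + 1), (m.choose l : K) * x ^ (m - l) * ((l.choose j : K) * e j * y ^ (l - j)) := by
    intro j hj
    have hj := mem_range.1 hj
    rw [sum_Ico_eq_sum_range, add_comm x y, add_pow, mul_sum]
    rw [show m - j + 1 = m + 1 - j by omega]
    apply sum_congr rfl
    intro i hi
    have hi := mem_range.1 hi
    have h2 := Nat.choose_mul (n := m) (k := j + i) (s := j) (by omega)
    rw [Nat.add_sub_cancel_left] at h2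
    have h3 := congrArg (Nat.cast : ℕ → K) h2
    push_cast at h3
    rw [Nat.add_sub_cancel_left, Nat.sub_sub]
    linear_combination -(e j * y ^ i * x ^ (m - (j + i))) * h3
  rw [sum_congr rfl h1]
  apply sum_comm'
  intro a b
  simp only [mem_range, mem_Ico]
  omega

lemma eulP_one (e : ℕ → K) (m : ℕ)
    (he : ∑ j ∈ range (m + 1), (if Even (m - j) then (m.choose j : K) * e j else 0) = if m = 0 then 1 else 0) :
    eulP e m 1 + eulP e m (-1) = if m = 0 then 2 else 0 := by
  have : eulP e m 1 + eulP e m (-1) = 2 * ∑ j ∈ range (m + 1), (if Even (m - j) then (m.choose j : K) * e j else 0) := by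
    unfold eulP
    rw [← sum_add_distrib, mul_sum]
    apply sum_congr rfl
    intro j _
    split_ifs with h
    · rw [h.neg_one_pow]; ring
    · rw [(Nat.not_even_iff_odd.1 h).neg_one_pow]; ring
  rw [this, he]
  split_ifs <;> simp

lemma eulP_rel (e : ℕ → K) (he : ∀ m, ∑ j ∈ range (m + 1), (if Even (m - j) then (m.choose j : K) * e j else 0) = if m = 0 then 1 else 0) (m : ℕ) (x : K) :
    eulP e m (x + 1) + eulP e m (x - 1) = 2 * x ^ m := by
  rw [sub_eq_add_neg, eulP_add, eulP_add, ← sum_add_distrib]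
  simp only [← mul_add, eulP_one e _ (he _)]
  rw [sum_range_succ']
  simp
  ring

lemma eulP_zero (e : ℕ → K) (m : ℕ) : eulP e m 0 = e m := by
  unfold eulP
  rw [sum_range_succ, sum_eq_zero]
  · simp
  · intro j hj
    have := mem_range.1 hj
    rw [zero_pow (by omega), mul_zero]

lemma eulP_neg_one (e : ℕ → K) (he : ∀ m, ∑ j ∈ range (m + 1), (if Even (m - j) then (m.choose j : K) * e j else 0) = if m = 0 then 1 else 0)
    (ho : ∀ m, Odd m → e m = 0) (h2 : (2 : K) ≠ 0) (m : ℕ) (hm : Even m) (hm0 : m ≠ 0) :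
    eulP e m (-1) = 0 := by
  have h := eulP_one e m (he m)
  rw [if_neg hm0] at h
  have : eulP e m 1 = eulP e m (-1) := by
    unfold eulP
    apply sum_congr rfl
    intro j hj
    have := mem_range.1 hj
    rcases Nat.even_or_odd j with hj | hj
    · have : Even (m - j) := by rw [Nat.even_iff] at *; omega
      rw [this.neg_one_pow, one_pow]
    · rw [ho j hj]; ring
  rw [this, ← two_mul] at h
  exact (mul_eq_zero.1 h).resolve_left h2

lemma eul_sum (e : ℕ → K) (he : ∀ m, ∑ j ∈ range (m + 1), (if Even (m - j) then (m.choose j : K) * e j else 0) = if m = 0 then 1 else 0)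
    (i : K) (hi : i ^ 2 = -1) (m N : ℕ) :
    ∑ k ∈ range N, 2 * i ^ k * (k : K) ^ m =
      - i ^ (N + 1) * eulP e m N - i ^ N * eulP e m ((N : K) - 1) + i * eulP e m 0 + eulP e m (-1) := by
  induction N with
  | zero => simp; ring
  | succ N ih =>
    rw [sum_range_succ, ih]
    have h := eulP_rel e he m N
    push_cast
    rw [add_sub_cancel_right]
    linear_combination -i ^ N * h + i ^ N * eulP e m (N + 1) * hi

lemma L2_eq (p : ℕ) [Fact p.Prime] [CharP K p] (hp3 : 3 < p) (e : ℕ → K) (he : ∀ m, ∑ j ∈ range (m + 1), (if Even (m - j) then (m.choose j : K) * e j else 0) = if m = 0 then 1 else 0)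
    (ho : ∀ m, Odd m → e m = 0) (i : K) (hi : i ^ 2 = -1) :
    ∑ k ∈ Ico 1 p, 2 * i ^ k / (k : K) ^ 2 = (i - i ^ (p + 1)) * e (p - 3) := by
  have hp : p.Prime := Fact.out
  have hodd : p % 2 = 1 := hp.eq_two_or_odd.resolve_left (by omega)
  have hne : ∀ k, 1 ≤ k → k < p → (k : K) ≠ 0 := by
    intro k h1 h2 h0
    rw [CharP.cast_eq_zero_iff K p] at h0
    have := Nat.le_of_dvd (by omega) h0
    omega
  have h2 : (2 : K) ≠ 0 := by simpa using hne 2 (by omega) (by omega)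
  have h := eul_sum e he i hi (p - 3) p
  rw [CharP.cast_eq_zero K p, zero_sub, eulP_neg_one e he ho h2 (p - 3) (by rw [Nat.even_iff]; omega) (by omega), eulP_zero] at h
  rw [range_eq_Ico, sum_eq_sum_Ico_succ_bot (by omega)] at h
  simp only [Nat.cast_zero] at h
  rw [zero_pow (by omega)] at h
  have : ∑ k ∈ Ico 1 p, 2 * i ^ k / (k : K) ^ 2 = ∑ k ∈ Ico (0 + 1) p, 2 * i ^ k * (k : K) ^ (p - 3) := by
    apply sum_congr rfl
    intro k hk
    have hk := mem_Ico.1 hk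
    have hk0 := hne k hk.1 hk.2
    have hf : (k : K) ^ p = k := by
      have := map_natCast (frobenius K p) k
      rwa [frobenius_def] at this
    rw [div_eq_iff (pow_ne_zero _ hk0), mul_assoc, ← pow_add]
    have : (k : K) ^ (p - 3 + 2) = 1 := by
      apply mul_right_cancel₀ hk0
      rw [← pow_succ, show p - 3 + 2 + 1 = p by omega, hf, one_mul]
    rw [this, mul_one]
  rw [this]
  linear_combination h

/-- reduction relation from rationals to `K`. -/
def RelK (a : ℚ) (x : K) : Prop := ∃ N D : ℤ, (D : K) ≠ 0 ∧ a * D = N ∧ x * D = N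

lemma RelK.add {a b : ℚ} {x y : K} (h : RelK a x) (hq : RelK b y) : RelK (a + b) (x + y) := by
  obtain ⟨N, D, h1, h2, h3⟩ := h
  obtain ⟨Nq, Dq, h1q, h2q, h3q⟩ := hq
  refine ⟨N * Dq + Nq * D, D * Dq, by push_cast; exact mul_ne_zero h1 h1q, ?_, ?_⟩
  · push_cast; linear_combination Dq * h2 + D * h2q
  · push_cast; linear_combination Dq * h3 + D * h3q

lemma RelK.mul {a b : ℚ} {x y : K} (h : RelK a x) (hq : RelK b y) : RelK (a * b) (x * y) := by
  obtain ⟨N, D, h1, h2, h3⟩ := h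
  obtain ⟨Nq, Dq, h1q, h2q, h3q⟩ := hq
  refine ⟨N * Nq, D * Dq, by push_cast; exact mul_ne_zero h1 h1q, ?_, ?_⟩
  · push_cast; rw [← h2, ← h2q]; ring
  · push_cast; rw [← h3, ← h3q]; ring

lemma RelK.int (z : ℤ) : RelK (z : ℚ) (z : K) := ⟨z, 1, by simp, by simp, by simp⟩

lemma RelK.sum {s : Finset ℕ} {f : ℕ → ℚ} {g : ℕ → K} (h : ∀ k ∈ s, RelK (f k) (g k)) :
    RelK (∑ k ∈ s, f k) (∑ k ∈ s, g k) := by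
  classical
  induction s using Finset.induction_on with
  | empty => simpa using RelK.int (K := K) 0
  | insert a s ha ih =>
    rw [sum_insert ha, sum_insert ha]
    exact (h a (by simp)).add (ih fun k hk => h k (by simp [hk]))

lemma RelK.inv (n : ℕ) (h : (n : K) ≠ 0) : RelK (1 / (n : ℚ)) (1 / (n : K)) := by
  refine ⟨1, n, by simpa using h, ?_, ?_⟩
  · have : (n : ℚ) ≠ 0 := by rintro h0; apply h; have : n = 0 := by exact_mod_cast h0
                             simp [this]
    push_cast; field_simp
  · push_cast; field_simp

lemma RelK.dvd {a : ℚ} (p : ℕ) [Fact p.Prime] [CharP K p] (h : RelK a (0 : K)) : (p : ℤ) ∣ a.num := by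
  obtain ⟨N, D, h1, h2, h3⟩ := h
  rw [zero_mul] at h3
  have hN : (p : ℤ) ∣ N := (CharP.intCast_eq_zero_iff K p N).1 h3.symm
  have hD : ¬ (p : ℤ) ∣ D := fun h => h1 ((CharP.intCast_eq_zero_iff K p D).2 h)
  have : a.num * D = N * a.den := by
    have h4 : (a.num : ℚ) = a * a.den := (Rat.mul_den_eq_num a).symm
    have : ((a.num * D : ℤ) : ℚ) = ((N * a.den : ℤ) : ℚ) := by
      push_cast; rw [h4, ← h2]; ring
    exact_mod_cast this
  have hd : (p : ℤ) ∣ a.num * D := this ▸ hN.mul_right _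
  exact ((Nat.prime_iff_prime_int.1 Fact.out).dvd_or_dvd hd).resolve_right hD
end

section
open Finset Polynomial

lemma final_K {K : Type*} [Field K] (n p : ℕ) (hn : p = 2 * n + 1) (hp3 : 3 < p) [Fact p.Prime] [CharP K p]
    (e : ℕ → K) (he : ∀ m, ∑ j ∈ range (m + 1), (if Even (m - j) then (m.choose j : K) * e j else 0) = if m = 0 then 1 else 0)
    (ho : ∀ m, Odd m → e m = 0) (i : K) (hi : i ^ 2 = -1) :
    ∑ k ∈ range p, ((2 * k).choose k : K) * (1 / 2) ^ k * (∑ j ∈ Icc 1 k, 1 / (j : K) ^ 2) = - e (p - 3) := by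
  have hp : p.Prime := Fact.out
  have h2 : (2 : K) ≠ 0 := by
    intro h0
    have : ((2 : ℕ) : K) = 0 := by exact_mod_cast h0
    rw [CharP.cast_eq_zero_iff K p] at this
    have := Nat.le_of_dvd (by omega) this
    omega
  have hi0 : i ≠ 0 := by rintro rfl; norm_num at hi
  have hP := congrArg (eval ((1 + i) / 2)) (Psi_eq (K := K) n p hn)
  have ht : (1 + i) / 2 * (1 - (1 + i) / 2) = 1 / 2 := by
    field_simp; linear_combination -hi
  have hb : (1 + i) / 2 - 1 = i * ((1 + i) / 2) := by
    field_simp; linear_combination -hi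
  have ha : 1 - 2 * ((1 + i) / 2) = -i := by field_simp; ring
  simp only [eval_mul, eval_finsetSum, eval_sub, eval_one, eval_ofNat, eval_X, eval_pow, eval_C, ht, hb, ha] at hP
  have hR : ∑ k ∈ Ico 1 p, 2 / (k : K) ^ 2 * (((1 + i) / 2) ^ (p - k) * (i * ((1 + i) / 2)) ^ k) =
      ((1 + i) / 2) ^ p * ((i - i ^ (p + 1)) * e (p - 3)) := by
    rw [← L2_eq p hp3 e he ho i hi, mul_sum]
    apply sum_congr rfl
    intro k hk
    have hk := mem_Ico.1 hk
    rw [mul_pow, ← Nat.sub_add_cancel hk.2.le, pow_add, Nat.add_sub_cancel]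
    ring
  have hα : ((1 + i) / 2) ^ p = (1 + i ^ p) / 2 := by
    rw [div_pow, add_pow_char, one_pow]
    have : (2 : K) ^ p = 2 := by
      have := map_ofNat (frobenius K p) 2
      simpa [frobenius_def] using this
    rw [this]
  have hL : ∑ k ∈ range p, ((2 * k).choose k : K) * (1 / 2) ^ k * (∑ j ∈ Icc 1 k, 1 / (j : K) ^ 2) =
      ∑ k ∈ range (n + 1), ((n.choose k : K) * (-4) ^ k * ∑ j ∈ Icc 1 k, 1 / (j : K) ^ 2) * (1 / 2) ^ k := by
    symm
    rw [sum_subset (range_subset_range.2 (show n + 1 ≤ p by omega))]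
    · apply sum_congr rfl
      intro k hk
      rw [cb_eq n p hn k (mem_range.1 hk)]
      ring
    · intro k _ hk
      rw [mem_range, not_lt] at hk
      rw [Nat.choose_eq_zero_of_lt (by omega)]; simp
  rw [hL]
  rw [hR, hα] at hP
  have hpp : (i ^ p) ^ 2 = -1 := by
    rw [← pow_mul, mul_comm, pow_mul, hi]
    exact Odd.neg_one_pow (by rw [Nat.odd_iff]; omega)
  apply mul_left_cancel₀ (neg_ne_zero.2 hi0)
  rw [hP]
  field_simp
  rw [pow_succ]
  linear_combination -i * e (p - 3) * hpp
end

lemma main_K {K : Type*} [Field K] (p : ℕ) [CharP K p] (i : K) (hi : i ^ 2 = -1) (hp : p.Prime) (hp3 : 3 < p) :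
    ratModEq p (∑ k ∈ Finset.range p, ((2 * k).choose k : ℚ) / 2 ^ k * H2 k)
      (-eulerNumber (p - 3)) := by
  have : Fact p.Prime := ⟨hp⟩
  have hodd : p % 2 = 1 := hp.eq_two_or_odd.resolve_left (by omega)
  obtain ⟨n, hn⟩ : ∃ n, p = 2 * n + 1 := ⟨p / 2, by omega⟩
  have hne : ∀ k, 1 ≤ k → k < p → (k : K) ≠ 0 := by
    intro k h1 h2 h0
    rw [CharP.cast_eq_zero_iff K p] at h0
    have := Nat.le_of_dvd (by omega) h0
    omega
  choose z hz using euler_int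
  have hE : ∀ m, ∑ j ∈ Finset.range (m + 1), (if Even (m - j) then (m.choose j : ℤ) * z j else 0) = if m = 0 then 1 else 0 := by
    intro m
    rcases eq_or_ne m 0 with rfl | hm
    · have : (z 0 : ℚ) = 1 := by rw [← hz]; simp [eulerNumber]
      have : z 0 = 1 := by exact_mod_cast this
      simp [this]
    · have := euler_rec m hm
      simp only [hz] at this
      rw [if_neg hm]
      exact_mod_cast this
  have hEK : ∀ m, ∑ j ∈ Finset.range (m + 1), (if Even (m - j) then (m.choose j : K) * (z j : K) else 0) = if m = 0 then 1 else 0 := by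
    intro m
    have := congrArg (Int.cast : ℤ → K) (hE m)
    push_cast at this
    exact this
  have hO : ∀ m, Odd m → (z m : K) = 0 := by
    intro m hm
    have h1 := euler_odd m hm
    rw [hz] at h1
    have : z m = 0 := by exact_mod_cast h1
    simp [this]
  have hfin := final_K n p hn hp3 (fun j => (z j : K)) hEK hO i hi
  apply RelK.dvd (K := K) p
  have h0 : (0 : K) = ∑ k ∈ Finset.range p, ((2 * k).choose k : K) * (1 / 2) ^ k * (∑ j ∈ Finset.Icc 1 k, 1 / (j : K) ^ 2) + (z (p - 3) : K) := by
    rw [hfin]; ring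
  rw [h0, sub_neg_eq_add, hz]
  refine RelK.add (RelK.sum ?_) (RelK.int _)
  intro k hk
  have hk := Finset.mem_range.1 hk
  have hpow : ∀ m, RelK ((1 / 2 : ℚ) ^ m) ((1 / 2 : K) ^ m) := by
    intro m
    induction m with
    | zero => simpa using RelK.int (K := K) 1
    | succ m ih =>
      rw [pow_succ, pow_succ]
      refine ih.mul ?_
      have := RelK.inv (K := K) 2 (hne 2 (by omega) (by omega))
      exact_mod_cast this
  have hc : RelK (((2 * k).choose k : ℕ) : ℚ) (((2 * k).choose k : ℕ) : K) := by
    have := RelK.int (K := K) ((2 * k).choose k : ℤ)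
    exact_mod_cast this
  rw [show ((2 * k).choose k : ℚ) / 2 ^ k = ((2 * k).choose k : ℚ) * (1 / 2) ^ k by
    rw [one_div, inv_pow, div_eq_mul_inv]]
  refine (hc.mul (hpow k)).mul ?_
  unfold H2
  apply RelK.sum
  intro j hj
  have hj := Finset.mem_Icc.1 hj
  have h := RelK.inv (K := K) j (hne j hj.1 (by omega))
  have := h.mul h
  rw [show (1 : ℚ) / (j : ℚ) ^ 2 = 1 / j * (1 / j) by ring, show (1 : K) / (j : K) ^ 2 = 1 / j * (1 / j) by ring]
  exact this

theorem stmt1 (p : ℕ) (hp : p.Prime) (hp3 : 3 < p) :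
    ratModEq p (∑ k ∈ Finset.range p, ((2 * k).choose k : ℚ) / 2 ^ k * H2 k)
      (-eulerNumber (p - 3)) := by
  have : Fact p.Prime := ⟨hp⟩
  have : CharP (AlgebraicClosure (ZMod p)) p :=
    charP_of_injective_algebraMap (algebraMap (ZMod p) _).injective p
  obtain ⟨i, hi⟩ := IsAlgClosed.exists_pow_nat_eq (-1 : AlgebraicClosure (ZMod p)) (n := 2) (by norm_num)
  exact main_K p i hi hp hp3
end

section
/- Let p be an odd prime with p > 3. Then ∑_{k=0}^{p-1} (C(2k,k)/2^k) · H_k ≡ (-1)^{(p-1)/2} · H_{(p-1)/2}/2 − p·E_{p-3} (mod p²). -/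
open Finset Polynomial

/-- integer Euler numbers -/
def eZ : ℕ → ℤ
  | 0 => 1
  | n + 1 =>
      -∑ j ∈ (Finset.range (n + 1)).attach,
        if Even (n + 1 - j.1) then ((n + 1).choose (n + 1 - j.1) : ℤ) * eZ j.1 else 0
decreasing_by exact Finset.mem_range.mp j.2

lemma eZ_cast (n : ℕ) : ((eZ n : ℤ) : ℚ) = eulerNumber n := by
  induction n using Nat.strong_induction_on with
  | _ n ih =>
    cases n with
    | zero => rw [eZ, eulerNumber]; simp
    | succ n =>
      rw [eZ, eulerNumber]
      push_cast
      congr 1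
      apply Finset.sum_congr rfl
      intro j hj
      rw [← ih j.1 (Finset.mem_range.mp j.2)]

lemma eZ_rec (n : ℕ) (hn : n ≠ 0) :
    ∑ j ∈ range (n + 1), (if Even (n - j) then (n.choose j : ℤ) * eZ j else 0) = 0 := by
  obtain ⟨n, rfl⟩ := Nat.exists_eq_succ_of_ne_zero hn
  rw [Finset.sum_range_succ]
  have h : eZ (n + 1) = -∑ j ∈ (Finset.range (n + 1)).attach,
        if Even (n + 1 - j.1) then ((n + 1).choose (n + 1 - j.1) : ℤ) * eZ j.1 else 0 := by
    rw [eZ]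
  rw [Finset.sum_attach (Finset.range (n + 1)) (fun j => if Even (n + 1 - j) then ((n + 1).choose (n + 1 - j) : ℤ) * eZ j else 0)] at h
  simp only [Nat.succ_eq_add_one, Nat.sub_self, Even.zero, if_true, Nat.choose_self, Nat.cast_one, one_mul]
  rw [h, ← sub_eq_add_neg, sub_eq_zero]
  apply Finset.sum_congr rfl
  intro j hj
  rw [Nat.choose_symm (Finset.mem_range.mp hj).le]

/-- scaled Euler polynomial function -/
def eP {R : Type*} [CommRing R] (N : ℕ) (x : R) : R :=
  ∑ k ∈ range (N + 1), (N.choose k : R) * (eZ k : R) * x ^ (N - k)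

lemma eP_shift {R : Type*} [CommRing R] (N : ℕ) (x c : R) :
    eP N (x + c) = ∑ m ∈ range (N + 1), (N.choose m : R) * x ^ (N - m) *
      ∑ k ∈ range (m + 1), (m.choose k : R) * (eZ k : R) * c ^ (m - k) := by
  unfold eP
  have h1 : ∀ k ∈ range (N + 1), (N.choose k : R) * (eZ k : R) * (x + c) ^ (N - k)
      = ∑ i ∈ range (N - k + 1), (N.choose k : R) * (eZ k : R) *
        (c ^ i * x ^ (N - k - i) * ((N - k).choose i : R)) := by
    intro k hk
    rw [add_comm x c, add_pow, Finset.mul_sum]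
  rw [Finset.sum_congr rfl h1]
  simp only [Finset.mul_sum]
  rw [Finset.sum_sigma', Finset.sum_sigma']
  refine Finset.sum_nbij' (fun a => ⟨a.1 + a.2, a.1⟩) (fun a => ⟨a.2, a.1 - a.2⟩) ?_ ?_ ?_ ?_ ?_
  · rintro ⟨k, i⟩ h
    simp only [mem_sigma, mem_range] at h ⊢
    omega
  · rintro ⟨k, i⟩ h
    simp only [mem_sigma, mem_range] at h ⊢
    omega
  · rintro ⟨k, i⟩ h
    simp
  · rintro ⟨k, i⟩ h
    simp only [mem_sigma, mem_range] at h ⊢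
    have : i + (k - i) = k := by omega
    simp [this]
  · rintro ⟨k, i⟩ h
    simp only [mem_sigma, mem_range] at h ⊢
    have h2 := Nat.choose_mul (n := N) (k := k + i) (s := k) (by omega)
    rw [Nat.add_sub_cancel_left] at h2
    have h3 : (N.choose (k + i) : R) * ((k + i).choose k : R) = N.choose k * (N - k).choose i := by
      exact_mod_cast congrArg (Nat.cast : ℕ → R) h2
    rw [Nat.add_sub_cancel_left, Nat.sub_sub]
    linear_combination (-(eZ k : R) * c ^ i * x ^ (N - (k + i))) * h3

lemma eP_fe {R : Type*} [CommRing R] (N : ℕ) (x : R) :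
    eP N (x + 1) + eP N (x - 1) = 2 * x ^ N := by
  rw [sub_eq_add_neg, eP_shift, eP_shift, ← Finset.sum_add_distrib]
  rw [Finset.sum_eq_single 0]
  · simp [eZ]; ring
  · intro m hm hm0
    rw [← mul_add, ← Finset.sum_add_distrib]
    have h := congrArg (Int.cast : ℤ → R) (eZ_rec m hm0)
    push_cast at h
    have : ∑ k ∈ range (m + 1), ((m.choose k : R) * (eZ k : R) * 1 ^ (m - k) + (m.choose k : R) * (eZ k : R) * (-1) ^ (m - k)) = 2 * ∑ j ∈ range (m + 1), (if Even (m - j) then (m.choose j : R) * (eZ j : R) else 0) := by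
      rw [Finset.mul_sum]
      apply Finset.sum_congr rfl
      intro k hk
      split_ifs with h
      · rw [h.neg_one_pow]; ring
      · rw [(Nat.not_even_iff_odd.mp h).neg_one_pow]; ring
    rw [this, h]; ring
  · simp

lemma eP_zero {R : Type*} [CommRing R] (N : ℕ) : eP N (0 : R) = eZ N := by
  unfold eP
  rw [Finset.sum_range_succ, Finset.sum_eq_zero]
  · simp
  · intro k hk
    rw [zero_pow, mul_zero]
    have := mem_range.mp hk
    omega

/-- harmonic numbers with respect to `iv` -/
def hh {R : Type*} [CommRing R] (iv : ℕ → R) (k : ℕ) : R := ∑ j ∈ range k, iv (j + 1)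

def FF {R : Type*} [CommRing R] (iv : ℕ → R) (m : ℕ) : R :=
  ∑ k ∈ range (m + 1), (m.choose k : R) * ((-2) ^ k * hh iv k)

lemma FF_rec {R : Type*} [CommRing R] (iv : ℕ → R) (M : ℕ)
    (hiv : ∀ j, 1 ≤ j → j ≤ M → (j : R) * iv j = 1) (m : ℕ) (hm : m + 1 ≤ M) :
    FF iv (m + 1) + FF iv m = ((-1) ^ (m + 1) - 1) * iv (m + 1) := by
  have key : FF iv (m + 1) = ∑ k ∈ range (m + 1), (m.choose k : R) * ((-2) ^ k * hh iv k)
      + ∑ k ∈ range (m + 1), (m.choose k : R) * ((-2) ^ (k + 1) * hh iv (k + 1)) := by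
    unfold FF
    have e1 := Finset.sum_range_succ' (fun k => (m.choose k : R) * ((-2) ^ k * hh iv k)) (m + 1)
    rw [Finset.sum_range_succ _ (m + 1), Nat.choose_succ_self] at e1
    rw [Finset.sum_range_succ' _ (m + 1)]
    simp only [Nat.choose_succ_succ, Nat.cast_add, add_mul, Finset.sum_add_distrib]
    simp only [Nat.choose_zero_right, Nat.cast_zero, Nat.succ_eq_add_one] at e1 ⊢
    linear_combination -e1
  have h2 : FF iv (m + 1) + FF iv m
      = ∑ k ∈ range (m + 1), (m.choose k : R) * ((-2) ^ (k + 1) * iv (k + 1)) := by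
    rw [key]
    unfold FF
    rw [← Finset.sum_add_distrib, ← Finset.sum_add_distrib]
    apply Finset.sum_congr rfl
    intro k hk
    have : hh iv (k + 1) = hh iv k + iv (k + 1) := by unfold hh; rw [Finset.sum_range_succ]
    rw [this]; ring
  have h3 : ((m + 1 : ℕ) : R) * ∑ k ∈ range (m + 1), (m.choose k : R) * ((-2) ^ (k + 1) * iv (k + 1))
      = (-1) ^ (m + 1) - 1 := by
    have e := add_pow (-2 : R) 1 (m + 1)
    rw [Finset.sum_range_succ'] at e
    have e2 : (-2 + 1 : R) = -1 := by ring
    rw [e2] at e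
    rw [e, Finset.mul_sum]
    simp only [pow_zero, one_pow, mul_one, Nat.choose_zero_right, Nat.cast_one, add_sub_cancel_right]
    apply Finset.sum_congr rfl
    intro k hk
    have hk' := mem_range.mp hk
    have c : ((m + 1 : ℕ) : R) * (m.choose k : R) = ((m + 1).choose (k + 1) : R) * ((k + 1 : ℕ) : R) := by
      exact_mod_cast congrArg (Nat.cast : ℕ → R) (Nat.add_one_mul_choose_eq m k)
    have d := hiv (k + 1) (by omega) (by omega)
    linear_combination ((-2) ^ (k + 1) * iv (k + 1)) * c + (((m + 1).choose (k + 1) : R) * (-2) ^ (k + 1)) * d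
  have h4 := hiv (m + 1) (by omega) hm
  rw [h2]
  linear_combination (iv (m + 1)) * h3 - (∑ k ∈ range (m + 1), (m.choose k : R) * ((-2) ^ (k + 1) * iv (k + 1))) * h4

lemma FF_closed {R : Type*} [CommRing R] (iv : ℕ → R) (M : ℕ)
    (hiv : ∀ j, 1 ≤ j → j ≤ M → (j : R) * iv j = 1) (m : ℕ) (hm : m ≤ M) :
    FF iv m = (-1) ^ m * ∑ j ∈ range m, (1 - (-1) ^ (j + 1)) * iv (j + 1) := by
  induction m with
  | zero => simp [FF, hh]
  | succ m ih =>
    have := FF_rec iv M hiv m hm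
    rw [ih (by omega)] at this
    rw [Finset.sum_range_succ]
    have s : ((-1 : R) ^ m) * (-1) ^ m = 1 := by rw [← mul_pow]; simp
    rw [pow_succ] at this ⊢
    linear_combination this + iv (m+1) * s

lemma uniq {p : ℕ} [Fact p.Prime] (hp3 : 3 < p) (g : ZMod p → ZMod p)
    (hg : ∀ a, g (a + 1) + g a = 0) (a : ZMod p) : g a = 0 := by
  have h : ∀ k : ℕ, g (a + k) = (-1) ^ k * g a := by
    intro k
    induction k with
    | zero => simp
    | succ k ih =>
      have := hg (a + k)
      push_cast
      rw [← add_assoc, pow_succ]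
      linear_combination this - ih
  have hp : p.Prime := Fact.out
  have hodd : Odd p := hp.odd_of_ne_two (by omega)
  have h1 := h p
  rw [hodd.neg_one_pow, ZMod.natCast_self, add_zero] at h1
  have h2 : (2 : ZMod p) ≠ 0 := by
    intro h0
    have : ((2 : ℕ) : ZMod p) = 0 := by exact_mod_cast h0
    rw [ZMod.natCast_eq_zero_iff] at this
    have := Nat.le_of_dvd (by norm_num) this
    omega
  have : 2 * g a = 0 := by linear_combination h1
  exact (mul_eq_zero.mp this).resolve_left h2

def fi {R : Type*} [CommRing R] (iv : ℕ → R) (k : ℕ) : R := ∏ j ∈ range k, iv (j + 1)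

lemma fi_mul {R : Type*} [CommRing R] (iv : ℕ → R) (M : ℕ)
    (hiv : ∀ j, 1 ≤ j → j ≤ M → (j : R) * iv j = 1) (k : ℕ) (hk : k ≤ M) :
    (k.factorial : R) * fi iv k = 1 := by
  induction k with
  | zero => simp [fi]
  | succ k ih =>
    have h1 := ih (by omega)
    have h2 := hiv (k + 1) (by omega) hk
    have : fi iv (k + 1) = fi iv k * iv (k + 1) := by unfold fi; rw [Finset.prod_range_succ]
    rw [this, Nat.factorial_succ, Nat.cast_mul]
    linear_combination (((k + 1 : ℕ) : R) * iv (k + 1)) * h1 + h2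

noncomputable def ff {R : Type*} [CommRing R] (iv : ℕ → R) (p : ℕ) : R[X] :=
  ∑ k ∈ range p, C ((-2) ^ k * hh iv k * fi iv k) * descPochhammer R k

lemma ff_eval_nat {R : Type*} [CommRing R] (iv : ℕ → R) (p : ℕ)
    (hiv : ∀ j, 1 ≤ j → j ≤ p - 1 → (j : R) * iv j = 1) (m : ℕ) (hm : m < p) :
    (ff iv p).eval (m : R) = FF iv m := by
  unfold ff FF
  rw [eval_finsetSum]
  rw [← Finset.sum_subset (s₁ := range (m + 1)) (s₂ := range p)]
  · apply Finset.sum_congr rfl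
    intro k hk
    have hk' := mem_range.mp hk
    rw [eval_mul, eval_C, descPochhammer_eval_eq_descFactorial, Nat.descFactorial_eq_factorial_mul_choose]
    have := fi_mul iv (p - 1) hiv k (by omega)
    push_cast
    linear_combination ((m.choose k : R) * ((-2) ^ k * hh iv k)) * this
  · intro k hk
    simp only [mem_range] at hk ⊢
    omega
  · intro k hk hk2
    simp only [mem_range] at hk hk2
    rw [eval_mul, eval_C, descPochhammer_eval_eq_descFactorial, Nat.descFactorial_of_lt (by omega)]
    simp

lemma desc_half {R : Type*} [CommRing R] (x : R) (hx : 2 * x = -1) (k : ℕ) :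
    (descPochhammer R k).eval x * (-2) ^ k * 2 ^ k = k.factorial * ((2 * k).choose k : R) := by
  induction k with
  | zero => simp
  | succ k ih =>
    rw [descPochhammer_succ_eval]
    have h := Nat.succ_mul_centralBinom_succ k
    unfold Nat.centralBinom at h
    have h' : ((k : R) + 1) * ((2 * (k + 1)).choose (k + 1) : R)
        = 2 * (2 * k + 1) * ((2 * k).choose k : R) := by
      exact_mod_cast congrArg (Nat.cast : ℕ → R) h
    rw [Nat.factorial_succ, pow_succ, pow_succ]
    push_cast
    linear_combination (2 * (2 * (k : R) + 1)) * ih - (k.factorial : R) * h'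
      - 2 * ((descPochhammer R k).eval x * (-2) ^ k * 2 ^ k) * hx

lemma ff_half {R : Type*} [CommRing R] (iv : ℕ → R) (p : ℕ)
    (hiv : ∀ j, 1 ≤ j → j ≤ p - 1 → (j : R) * iv j = 1) (i2 : R) (h2 : 2 * i2 = 1) :
    (ff iv p).eval (-i2) = ∑ k ∈ range p, ((2 * k).choose k : R) * i2 ^ k * hh iv k := by
  unfold ff
  rw [eval_finsetSum]
  apply Finset.sum_congr rfl
  intro k hk
  have hk' := mem_range.mp hk
  rw [eval_mul, eval_C]
  have h1 := fi_mul iv (p - 1) hiv k (by omega)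
  have h3 := desc_half (-i2) (by linear_combination -h2) k
  have h4 : (2 : R) ^ k * i2 ^ k = 1 := by rw [← mul_pow, h2, one_pow]
  linear_combination (hh iv k * fi iv k * i2 ^ k) * h3 +
    (((2 * k).choose k : R) * i2 ^ k * hh iv k) * h1
     - ((-2) ^ k * hh iv k * fi iv k * (descPochhammer R k).eval (-i2)) * h4

lemma ff_map {R S : Type*} [CommRing R] [CommRing S] (φ : R →+* S) (iv : ℕ → R) (p : ℕ) :
    (ff iv p).map φ = ff (fun j => φ (iv j)) p := by
  unfold ff hh fi
  rw [Polynomial.map_sum]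
  apply Finset.sum_congr rfl
  intro k _
  rw [Polynomial.map_mul, descPochhammer_map, map_C]
  have h2 : φ 2 = 2 := map_ofNat φ 2
  simp [h2]

lemma ff_deg {p : ℕ} [Fact p.Prime] (iv : ℕ → ZMod p) : (ff iv p).natDegree ≤ p - 1 := by
  unfold ff
  apply natDegree_sum_le_of_forall_le
  intro k hk
  have hk' := mem_range.mp hk
  refine (natDegree_C_mul_le _ _).trans ?_
  rw [descPochhammer_natDegree]
  omega

section zmod
variable {p : ℕ} [Fact p.Prime]

lemma two_ne (hp3 : 3 < p) : (2 : ZMod p) ≠ 0 := by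
  intro h0
  have : ((2 : ℕ) : ZMod p) = 0 := by exact_mod_cast h0
  rw [ZMod.natCast_eq_zero_iff] at this
  have := Nat.le_of_dvd (by norm_num) this
  omega

lemma Rpoly (hp3 : 3 < p) (iv : ℕ → ZMod p)
    (hiv : ∀ j, 1 ≤ j → j ≤ p - 1 → (j : ZMod p) * iv j = 1) (a : ZMod p) :
    (((ff iv p).eval (a + 1) - (ff iv p).eval (-1 - (a + 1))) +
     ((ff iv p).eval a - (ff iv p).eval (-1 - a))) = -2 * (a + 1) ^ (p - 2) := by
  have hp : p.Prime := Fact.out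
  have hodd : Odd p := hp.odd_of_ne_two (by omega)
  have hlt := ZMod.val_lt a
  obtain ⟨m, hm⟩ : ∃ m, m = a.val := ⟨_, rfl⟩
  have ha : a = (m : ZMod p) := by rw [hm]; exact (ZMod.natCast_zmod_val a).symm
  rw [← hm] at hlt
  have hp0 : (p : ZMod p) = 0 := ZMod.natCast_self p
  by_cases hmp : m = p - 1
  · have : a + 1 = 0 := by
      rw [ha, hmp]
      have : ((p - 1 : ℕ) : ZMod p) + 1 = ((p - 1 + 1 : ℕ) : ZMod p) := by push_cast; rfl
      rw [this, Nat.sub_add_cancel hp.one_le, hp0]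
    have ha' : a = -1 := by linear_combination this
    rw [this, zero_pow (by omega), ha']
    simp
  · have e1 : a + 1 = ((m + 1 : ℕ) : ZMod p) := by rw [ha]; push_cast; rfl
    have e2 : -1 - a = ((p - 2 - m + 1 : ℕ) : ZMod p) := by
      have : ((p - 2 - m + 1 : ℕ) : ZMod p) + (m + 1 : ℕ) = ((p : ℕ) : ZMod p) := by
        rw [← Nat.cast_add]; congr 1; omega
      rw [hp0] at this
      rw [← e1] at this
      linear_combination -this
    have e3 : -1 - (a + 1) = ((p - 2 - m : ℕ) : ZMod p) := by
      push_cast at e2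
      linear_combination e2
    rw [e3, e2, e1, ha]
    rw [ff_eval_nat iv p hiv _ (by omega), ff_eval_nat iv p hiv _ (by omega),
      ff_eval_nat iv p hiv _ (by omega), ff_eval_nat iv p hiv _ (by omega)]
    have r1 := FF_rec iv (p - 1) hiv m (by omega)
    have r2 := FF_rec iv (p - 1) hiv (p - 2 - m) (by omega)
    have i1 := hiv (m + 1) (by omega) (by omega)
    have i2 := hiv (p - 2 - m + 1) (by omega) (by omega)
    rw [← e1] at i1
    rw [← e2] at i2
    have i3 : iv (p - 2 - m + 1) = - iv (m + 1) := by
      linear_combination (-iv (p - 2 - m + 1)) * i1 - iv (m + 1) * i2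
    have hne : a + 1 ≠ 0 := left_ne_zero_of_mul_eq_one i1
    have i4 : (a + 1) ^ (p - 2) = iv (m + 1) := by
      have f := ZMod.pow_card_sub_one_eq_one hne
      have : p - 1 = p - 2 + 1 := by omega
      rw [this, pow_succ] at f
      linear_combination iv (m + 1) * f - (a + 1) ^ (p - 2) * i1
    have par : (-1 : ZMod p) ^ (p - 2 - m + 1) = (-1) ^ m := by
      obtain ⟨q, hq⟩ := hodd
      rcases Nat.even_or_odd m with hm | hm
      · rw [hm.neg_one_pow, Even.neg_one_pow]
        obtain ⟨r, hr⟩ := hm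
        exact ⟨q - r, by omega⟩
      · rw [hm.neg_one_pow, Odd.neg_one_pow]
        obtain ⟨r, hr⟩ := hm
        exact ⟨q - r - 1, by omega⟩
    rw [par, i3] at r2
    rw [← e1, i4]
    rw [pow_succ] at r1
    linear_combination r1 - r2

lemma Q_fe (hp3 : 3 < p) (iv : ℕ → ZMod p)
    (hiv : ∀ j, 1 ≤ j → j ≤ p - 1 → (j : ZMod p) * iv j = 1) (a : ZMod p) :
    ((derivative (ff iv p)).eval (a + 1) + (derivative (ff iv p)).eval (-1 - (a + 1))) +
     ((derivative (ff iv p)).eval a + (derivative (ff iv p)).eval (-1 - a))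
      = 4 * (a + 1) ^ (p - 3) := by
  set f := ff iv p with hf
  have hdeg := ff_deg iv
  rw [← hf] at hdeg
  have hpoly : f.comp (X + 1) - f.comp (-1 - (X + 1)) + (f - f.comp (-1 - X))
      + C 2 * (X + 1) ^ (p - 2) = 0 := by
    apply eq_zero_of_natDegree_lt_card_of_eval_eq_zero _ Function.injective_id
    · intro a
      have := Rpoly hp3 iv hiv a
      rw [← hf] at this
      simp only [eval_add, eval_sub, eval_comp, eval_mul, eval_C, eval_pow, eval_X, eval_one, eval_neg, id]
      linear_combination this
    · rw [ZMod.card]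
      have d1 : (X + 1 : (ZMod p)[X]).natDegree ≤ 1 := by compute_degree
      have d2 : (-1 - (X + 1) : (ZMod p)[X]).natDegree ≤ 1 := by compute_degree
      have d3 : (-1 - X : (ZMod p)[X]).natDegree ≤ 1 := by compute_degree
      have c : ∀ q : (ZMod p)[X], q.natDegree ≤ 1 → (f.comp q).natDegree ≤ p - 1 := by
        intro q hq
        refine natDegree_comp_le.trans ?_
        calc _ ≤ (p - 1) * 1 := Nat.mul_le_mul hdeg hq
          _ = _ := by ring
      have c4 : (C 2 * (X + 1) ^ (p - 2) : (ZMod p)[X]).natDegree ≤ p - 1 := by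
        refine (natDegree_C_mul_le _ _).trans ?_
        refine natDegree_pow_le.trans ?_
        calc _ ≤ (p - 2) * 1 := Nat.mul_le_mul le_rfl d1
          _ ≤ _ := by omega
      have t1 := natDegree_sub_le_of_le (c _ d1) (c _ d2)
      have t2 := natDegree_sub_le_of_le hdeg (c _ d3)
      simp only [max_self] at t1 t2
      have := natDegree_add_le_of_degree_le (natDegree_add_le_of_degree_le t1 t2) c4
      omega
  have hd := congrArg (fun q => (derivative q).eval a) hpoly
  have hp2 : ((p - 2 : ℕ) : ZMod p) = -2 := by
    rw [Nat.cast_sub (by omega), ZMod.natCast_self]; simp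
  have h23 : p - 2 - 1 = p - 3 := by omega
  simp only [derivative_add, derivative_sub, derivative_comp, derivative_mul, derivative_pow, derivative_X,
    derivative_one, derivative_neg, derivative_C, derivative_zero, eval_add, eval_sub, eval_mul, eval_comp,
    eval_neg, eval_X, eval_one, eval_C, eval_pow, eval_zero, hp2, h23] at hd
  linear_combination hd

lemma Q_vals (hp3 : 3 < p) (n : ℕ) (hn : 2 * n + 1 = p) (Q : ZMod p → ZMod p)
    (hQ : ∀ a, Q (a + 1) + Q a = 4 * (a + 1) ^ (p - 3)) :
    Q n = 8 * (eZ (p - 3) : ZMod p) ∧ Q 0 = 0 := by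
  have hp : p.Prime := Fact.out
  have h2 := two_ne hp3
  have hev : Even (p - 3) := ⟨n - 1, by omega⟩
  have hn0 : 2 * (n : ZMod p) + 1 = 0 := by
    have : ((2 * n + 1 : ℕ) : ZMod p) = 0 := by rw [hn]; exact ZMod.natCast_self p
    exact_mod_cast this
  constructor
  · have h := uniq hp3 (fun a => Q a - 8 * eP (p - 3) (2 * a + 1)) ?_ (n : ZMod p)
    · simp only [hn0, eP_zero] at h
      linear_combination h
    · intro a
      have e := eP_fe (p - 3) (2 * a + 2)
      have q := hQ a
      have e1 : (2 * a + 2 + 1 : ZMod p) = 2 * (a + 1) + 1 := by ring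
      have e2 : (2 * a + 2 - 1 : ZMod p) = 2 * a + 1 := by ring
      have e3 : (2 * a + 2 : ZMod p) = 2 * (a + 1) := by ring
      rw [e1, e2, e3, mul_pow] at e
      have f := ZMod.pow_card_sub_one_eq_one h2
      have : p - 1 = p - 3 + 2 := by omega
      rw [this, pow_add] at f
      linear_combination q - 8 * e - 4 * (a + 1) ^ (p - 3) * f
  · have h := uniq hp3 (fun a => Q a - Q (-1 - a)) ?_ 0
    · have q := hQ (-1)
      simp only [neg_add_cancel] at q
      rw [zero_pow (by omega)] at q
      simp only [sub_zero] at h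
      have : 2 * Q 0 = 0 := by linear_combination q + h
      exact (mul_eq_zero.mp this).resolve_left h2
    · intro a
      have q1 := hQ a
      have q2 := hQ (-1 - (a + 1))
      have e1 : (-1 - (a + 1) + 1 : ZMod p) = -1 - a := by ring
      have e2 : (-1 - a : ZMod p) = -(a + 1) := by ring
      rw [e1] at q2
      have e3 : (-1 - a) ^ (p - 3) = (a + 1) ^ (p - 3) := by rw [e2, hev.neg_pow]
      rw [e3] at q2
      linear_combination q1 - q2

lemma Q_sum (Q : ZMod p → ZMod p)
    (hQ : ∀ a, Q (a + 1) + Q a = 4 * (a + 1) ^ (p - 3)) (h0 : Q 0 = 0) (m : ℕ) :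
    Q m = (-1) ^ m * (4 * ∑ j ∈ range m, (-1) ^ (j + 1) * ((j + 1 : ℕ) : ZMod p) ^ (p - 3)) := by
  induction m with
  | zero => simpa using h0
  | succ m ih =>
    have := hQ m
    rw [ih] at this
    have s : ((-1 : ZMod p) ^ m) * (-1) ^ m = 1 := by rw [← mul_pow]; simp
    rw [Finset.sum_range_succ]
    push_cast at this ⊢
    rw [pow_succ]
    linear_combination this - 4 * ((m : ZMod p) + 1) ^ (p - 3) * s

lemma half_sum (hp3 : 3 < p) (n : ℕ) (hn : 2 * n + 1 = p) :
    ∑ j ∈ range n, ((j + 1 : ℕ) : ZMod p) ^ (p - 3) = 0 := by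
  have hp : p.Prime := Fact.out
  have h2 := two_ne hp3
  have hev : Even (p - 3) := ⟨n - 1, by omega⟩
  have h := FiniteField.sum_pow_lt_card_sub_one (K := ZMod p) (p - 3) (by rw [ZMod.card]; omega)
  have h1 : ∑ x : ZMod p, x ^ (p - 3) = ∑ j ∈ range p, (j : ZMod p) ^ (p - 3) := by
    symm
    refine Finset.sum_nbij' (fun j => (j : ZMod p)) (fun x => x.val) ?_ ?_ ?_ ?_ ?_
    · intro j _; simp
    · intro x _; simp [ZMod.val_lt]
    · intro j hj; exact ZMod.val_cast_of_lt (mem_range.mp hj)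
    · intro x _; simp
    · intro j _; rfl
  rw [h1] at h
  have h3 : p = (n + n) + 1 := by omega
  have h4 : ∑ j ∈ range p, (j : ZMod p) ^ (p - 3) = ∑ j ∈ range (n + n + 1), (j : ZMod p) ^ (p - 3) := by
    rw [← h3]
  rw [h4, Finset.sum_range_succ', Finset.sum_range_add, ← Finset.sum_range_reflect (fun x => ((n + x + 1 : ℕ) : ZMod p) ^ (p - 3)) n] at h
  have h5 : ∀ j ∈ range n, ((n + (n - 1 - j) + 1 : ℕ) : ZMod p) ^ (p - 3) = ((j + 1 : ℕ) : ZMod p) ^ (p - 3) := by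
    intro j hj
    have hj' := mem_range.mp hj
    have : ((n + (n - 1 - j) + 1 : ℕ) : ZMod p) = - ((j + 1 : ℕ) : ZMod p) := by
      rw [eq_neg_iff_add_eq_zero, ← Nat.cast_add]
      have : n + (n - 1 - j) + 1 + (j + 1) = p := by omega
      rw [this]; exact ZMod.natCast_self p
    rw [this, hev.neg_pow]
  rw [Finset.sum_congr rfl h5, Nat.cast_zero, zero_pow (by omega)] at h
  have : 2 * ∑ j ∈ range n, ((j + 1 : ℕ) : ZMod p) ^ (p - 3) = 0 := by linear_combination h
  exact (mul_eq_zero.mp this).resolve_left h2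

end zmod

lemma u_sum {R : Type*} [CommRing R] (iv : ℕ → R) (M : ℕ)
    (hiv : ∀ j, 1 ≤ j → j ≤ M → (j : R) * iv j = 1) (m : ℕ) (hm : 2 * m ≤ M) (h2M : 2 ≤ M) :
    ∑ j ∈ range (2 * m), iv 2 * (1 + (-1) ^ (j + 1)) * iv (j + 1) = iv 2 * hh iv m := by
  induction m with
  | zero => simp [hh]
  | succ m ih =>
    have hs : hh iv (m + 1) = hh iv m + iv (m + 1) := by unfold hh; rw [Finset.sum_range_succ]
    rw [show 2 * (m + 1) = 2 * m + 1 + 1 by ring, Finset.sum_range_succ, Finset.sum_range_succ,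
      ih (by omega), hs]
    have o1 : (-1 : R) ^ (2 * m + 1) = -1 := Odd.neg_one_pow ⟨m, rfl⟩
    have o2 : (-1 : R) ^ (2 * m + 1 + 1) = 1 := Even.neg_one_pow ⟨m + 1, by ring⟩
    rw [o1, o2]
    have a1 := hiv 2 (by omega) h2M
    have a2 := hiv (m + 1) (by omega) (by omega)
    have a3 := hiv (2 * m + 1 + 1) (by omega) (by omega)
    push_cast at a1 a2 a3
    have : iv (2 * m + 1 + 1) = iv 2 * iv (m + 1) := by
      linear_combination (-iv (2 * m + 1 + 1) * ((m + 1) * iv (m + 1))) * a1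
        - iv (2 * m + 1 + 1) * a2 + (iv 2 * iv (m + 1)) * a3
    rw [this]
    linear_combination (iv 2 * iv (m + 1)) * a1

lemma T_eq {R : Type*} [CommRing R] (iv : ℕ → R) (n p : ℕ) (hn : 2 * n + 1 = p) (hp3 : 3 < p)
    (hiv : ∀ j, 1 ≤ j → j ≤ p - 1 → (j : R) * iv j = 1) :
    ∑ j ∈ range n, (1 - (-1) ^ (j + 1)) * iv (j + 1) = iv 2 * hh iv n +
      p * ∑ j ∈ range n, iv 2 * (1 - (-1) ^ (j + 1)) * (iv (j + 1) * iv (p - (j + 1))) := by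
  have a1 := hiv 2 (by omega) (by omega)
  push_cast at a1
  have hu := u_sum iv (p - 1) hiv n (by omega) (by omega)
  rw [two_mul, Finset.sum_range_add,
    ← Finset.sum_range_reflect (fun x => iv 2 * (1 + (-1) ^ (n + x + 1)) * iv (n + x + 1)) n] at hu
  have key : ∀ j ∈ range n, iv (j + 1) - (1 - (-1) ^ (j + 1)) * iv (j + 1) +
      p * (iv 2 * (1 - (-1) ^ (j + 1)) * (iv (j + 1) * iv (p - (j + 1)))) =
      iv 2 * (1 + (-1) ^ (j + 1)) * iv (j + 1) +
      iv 2 * (1 + (-1) ^ (n + (n - 1 - j) + 1)) * iv (n + (n - 1 - j) + 1) := by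
    intro j hj
    have hj' := mem_range.mp hj
    have e : n + (n - 1 - j) + 1 = p - (j + 1) := by omega
    have sg : (-1 : R) ^ (p - (j + 1)) = - (-1) ^ (j + 1) := by
      rcases Nat.even_or_odd (j + 1) with h | h
      · rw [h.neg_one_pow, Odd.neg_one_pow]
        obtain ⟨r, hr⟩ := h
        exact ⟨n - r, by omega⟩
      · rw [h.neg_one_pow, Even.neg_one_pow]
        · simp
        obtain ⟨r, hr⟩ := h
        exact ⟨n - r, by omega⟩
    rw [e, sg]
    have b1 := hiv (j + 1) (by omega) (by omega)
    have b2 := hiv (p - (j + 1)) (by omega) (by omega)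
    rw [Nat.cast_sub (by omega)] at b2
    generalize iv (j + 1) = a at *
    generalize iv (p - (j + 1)) = b at *
    generalize (-1 : R) ^ (j + 1) = s at *
    have ab : (p : R) * (a * b) = a + b := by linear_combination a * b2 + b * b1
    linear_combination (iv 2 * (1 - s)) * ab - s * a * a1
  have := Finset.sum_congr rfl key
  simp only [Finset.sum_add_distrib, Finset.sum_sub_distrib] at this
  have hh' : hh iv n = ∑ j ∈ range n, iv (j + 1) := rfl
  rw [← Finset.mul_sum, ← hh'] at this
  linear_combination -this - hu + hh iv n * (-a1)

section padic
variable {p : ℕ} [Fact p.Prime]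

noncomputable def ivp (p : ℕ) [Fact p.Prime] (j : ℕ) : ℤ_[p] := Ring.inverse (j : ℤ_[p])

lemma ivp_spec (j : ℕ) (h1 : 1 ≤ j) (h2 : j ≤ p - 1) : (j : ℤ_[p]) * ivp p j = 1 := by
  unfold ivp
  apply Ring.mul_inverse_cancel
  have hp : p.Prime := Fact.out
  rw [PadicInt.isUnit_iff]
  have hnd : ¬ p ∣ j := by
    intro h
    have := Nat.le_of_dvd h1 h
    have := hp.two_le
    omega
  by_contra hne
  have hlt : ‖((j : ℤ) : ℤ_[p])‖ < 1 := by
    rw [Int.cast_natCast]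
    exact lt_of_le_of_ne (PadicInt.norm_le_one _) hne
  rw [PadicInt.norm_intCast_lt_one_iff] at hlt
  exact hnd (by exact_mod_cast hlt)

lemma lift_eq (x y : ℤ_[p]) (h : PadicInt.toZMod x = PadicInt.toZMod y) : ∃ z, x = y + p * z := by
  have : x - y ∈ RingHom.ker (PadicInt.toZMod : ℤ_[p] →+* ZMod p) := by
    rw [RingHom.mem_ker, map_sub, h, sub_self]
  rw [PadicInt.ker_toZMod, PadicInt.maximalIdeal_eq_span_p, Ideal.mem_span_singleton] at this
  obtain ⟨z, hz⟩ := this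
  exact ⟨z, by linear_combination hz⟩

lemma main_padic (hp3 : 3 < p) (n : ℕ) (hn : 2 * n + 1 = p) : ∃ z : ℤ_[p],
    ∑ k ∈ range p, ((2 * k).choose k : ℤ_[p]) * (ivp p 2) ^ k * hh (ivp p) k
     = (-1) ^ n * hh (ivp p) n * ivp p 2 - p * (eZ (p - 3) : ℤ_[p]) + p ^ 2 * z := by
  set iv := ivp p with hivdef
  have hiv : ∀ j, 1 ≤ j → j ≤ p - 1 → (j : ℤ_[p]) * iv j = 1 := ivp_spec
  have a1 := hiv 2 (by omega) (by omega)
  push_cast at a1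
  have h2 := two_ne hp3
  set φ : ℤ_[p] →+* ZMod p := PadicInt.toZMod with hφ
  have hivz : ∀ j, 1 ≤ j → j ≤ p - 1 → (j : ZMod p) * φ (iv j) = 1 := by
    intro j h1 h2
    have := congrArg φ (hiv j h1 h2)
    rwa [map_mul, map_natCast, map_one] at this
  have hn0 : 2 * (n : ZMod p) + 1 = 0 := by
    have : ((2 * n + 1 : ℕ) : ZMod p) = 0 := by rw [hn]; exact ZMod.natCast_self p
    exact_mod_cast this
  set fz := derivative (ff (fun j => φ (iv j)) p) with hfz
  have hQ := Q_fe hp3 (fun j => φ (iv j)) hivz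
  rw [← hfz] at hQ
  obtain ⟨q1, q0⟩ := Q_vals hp3 n hn (fun a => fz.eval a + fz.eval (-1 - a)) hQ
  have qs := Q_sum (fun a => fz.eval a + fz.eval (-1 - a)) hQ q0 n
  rw [q1] at qs
  have hnn : (-1 - n : ZMod p) = n := by linear_combination -hn0
  replace q1 : fz.eval (n : ZMod p) + fz.eval (-1 - n : ZMod p) = 8 * (eZ (p - 3) : ZMod p) := q1
  rw [hnn] at q1
  have hder : fz.eval (n : ZMod p) = 4 * (eZ (p - 3) : ZMod p) := by
    apply mul_left_cancel₀ h2
    linear_combination q1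
  obtain ⟨z1, hz1⟩ := lift_eq ((derivative (ff iv p)).eval (n : ℤ_[p])) (4 * (eZ (p - 3) : ℤ_[p])) (by
    have : φ ((derivative (ff iv p)).eval (n : ℤ_[p])) = fz.eval (n : ZMod p) := by
      rw [hfz, ← ff_map, derivative_map, eval_map, eval₂_at_natCast]
    change φ _ = φ _
    have h4 : φ 4 = 4 := map_ofNat φ 4
    rw [this, hder, map_mul, h4, map_intCast])
  obtain ⟨z2, hz2⟩ := lift_eq
    (∑ j ∈ range n, iv 2 * (1 - (-1) ^ (j + 1)) * (iv (j + 1) * iv (p - (j + 1))))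
    ((-1) ^ n * (eZ (p - 3) : ℤ_[p])) (by
    change φ _ = φ _
    have i2 := hivz 2 (by omega) (by omega)
    have hs := half_sum hp3 n hn
    have hterm : ∀ j ∈ range n, φ (iv 2 * (1 - (-1) ^ (j + 1)) * (iv (j + 1) * iv (p - (j + 1)))) =
        φ (iv 2) * ((-1) ^ (j + 1) * ((j + 1 : ℕ) : ZMod p) ^ (p - 3)) -
        φ (iv 2) * ((j + 1 : ℕ) : ZMod p) ^ (p - 3) := by
      intro j hj
      have hj' := mem_range.mp hj
      have b1 := hivz (j + 1) (by omega) (by omega)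
      have b2 := hivz (p - (j + 1)) (by omega) (by omega)
      rw [Nat.cast_sub (by omega), ZMod.natCast_self] at b2
      have hne : ((j + 1 : ℕ) : ZMod p) ≠ 0 := left_ne_zero_of_mul_eq_one b1
      have f := ZMod.pow_card_sub_one_eq_one hne
      rw [show p - 1 = p - 3 + 2 by omega, pow_add] at f
      simp only [map_mul, map_sub, map_one, map_pow, map_neg]
      generalize φ (iv (j + 1)) = a at *
      generalize φ (iv (p - (j + 1))) = b at *
      generalize ((j + 1 : ℕ) : ZMod p) = t at *
      have hb : b = -a := by linear_combination (-b) * b1 - a * b2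
      have hc : a ^ 2 = t ^ (p - 3) := by
        linear_combination (a ^ 2) * (-f) + t ^ (p - 3) * (t * a + 1) * b1
      rw [hb, ← hc]
      ring
    rw [map_sum, Finset.sum_congr rfl hterm, Finset.sum_sub_distrib, ← Finset.mul_sum, ← Finset.mul_sum, hs]
    simp only [map_mul, map_pow, map_neg, map_one, map_intCast]
    have s : ((-1 : ZMod p) ^ n) * (-1) ^ n = 1 := by rw [← mul_pow]; simp
    have h8 : (8 : ZMod p) ≠ 0 := by
      have : (8 : ZMod p) = 2 * 2 * 2 := by norm_num
      rw [this]
      exact mul_ne_zero (mul_ne_zero h2 h2) h2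
    apply mul_left_cancel₀ h8
    push_cast at i2 qs ⊢
    generalize (∑ j ∈ range n, (-1 : ZMod p) ^ (j + 1) * ((j : ZMod p) + 1) ^ (p - 3)) = S at *
    linear_combination 4 * S * i2 - (-1) ^ n * qs - 4 * S * s)
  have hT := T_eq iv n p hn hp3 hiv
  rw [hz2] at hT
  have hF := FF_closed iv (p - 1) hiv n (by omega)
  rw [hT, ← ff_eval_nat iv p hiv n (by omega)] at hF
  rw [← ff_half iv p hiv (iv 2) a1]
  obtain ⟨k, hk⟩ := binomExpansion (ff iv p) (n : ℤ_[p]) (-(p * iv 2))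
  have hx : (n : ℤ_[p]) + -(p * iv 2) = - iv 2 := by
    have hpn : (p : ℤ_[p]) = 2 * n + 1 := by
      have := congrArg (Nat.cast : ℕ → ℤ_[p]) hn
      push_cast at this
      exact this.symm
    rw [hpn]
    linear_combination (-(n : ℤ_[p])) * a1
  rw [hx, hz1, hF] at hk
  have s : ((-1 : ℤ_[p]) ^ n) * (-1) ^ n = 1 := by rw [← mul_pow]; simp
  refine ⟨(-1) ^ n * z2 - z1 * iv 2 + k * iv 2 ^ 2, ?_⟩
  rw [hk]
  linear_combination (p * (eZ (p - 3) : ℤ_[p])) * s - 2 * (p * (eZ (p - 3) : ℤ_[p])) * a1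

lemma ivp_coe (j : ℕ) (h1 : 1 ≤ j) (h2 : j ≤ p - 1) : ((ivp p j : ℤ_[p]) : ℚ_[p]) = (j : ℚ_[p])⁻¹ := by
  have := congrArg (fun x : ℤ_[p] => (x : ℚ_[p])) (ivp_spec j h1 h2)
  simp only [PadicInt.coe_mul, PadicInt.coe_natCast, PadicInt.coe_one] at this
  exact eq_inv_of_mul_eq_one_right this

lemma hh_coe (k : ℕ) (hk : k ≤ p - 1) : ((hh (ivp p) k : ℤ_[p]) : ℚ_[p]) = ((H k : ℚ) : ℚ_[p]) := by
  induction k with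
  | zero => simp [hh, H]
  | succ k ih =>
    have e1 : hh (ivp p) (k + 1) = hh (ivp p) k + ivp p (k + 1) := by
      unfold hh; rw [Finset.sum_range_succ]
    have e2 : H (k + 1) = H k + 1 / ((k + 1 : ℕ) : ℚ) := by
      unfold H; rw [Finset.sum_Icc_succ_top (by omega)]
    rw [e1, e2, PadicInt.coe_add, ih (by omega), ivp_coe _ (by omega) hk]
    push_cast
    simp

lemma dvd_num (q : ℚ) (z : ℤ_[p]) (h : (q : ℚ_[p]) = p ^ 2 * z) : ((p ^ 2 : ℕ) : ℤ) ∣ q.num := by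
  have hq : ((q.num : ℤ) : ℤ_[p]) = p ^ 2 * (z * (q.den : ℤ_[p])) := by
    apply Subtype.ext
    have e : (q : ℚ) * q.den = q.num := Rat.mul_den_eq_num q
    have e' := congrArg (Rat.cast : ℚ → ℚ_[p]) e
    push_cast at e' ⊢
    rw [← e', h]
    ring
  have := (PadicInt.norm_int_le_pow_iff_dvd (p := p) (k := q.num) (n := 2)).mp (by
    rw [PadicInt.norm_le_pow_iff_mem_span_pow, Ideal.mem_span_singleton, hq]
    exact dvd_mul_right _ _)
  exact_mod_cast this

end padic

theorem stmt3 (p : ℕ) (hp : p.Prime) (hp3 : 3 < p) :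
    ratModEq (p ^ 2) (∑ k ∈ Finset.range p, ((2 * k).choose k : ℚ) / 2 ^ k * H k)
      ((-1) ^ ((p - 1) / 2) * H ((p - 1) / 2) / 2 - p * eulerNumber (p - 3)) := by
  have : Fact p.Prime := ⟨hp⟩
  obtain ⟨q, hq⟩ := hp.odd_of_ne_two (by omega)
  have hn : (p - 1) / 2 = q := by omega
  rw [hn]
  obtain ⟨z, hz⟩ := main_padic hp3 q hq.symm
  unfold ratModEq
  apply dvd_num (p := p) _ z
  have h := congrArg (fun x : ℤ_[p] => (x : ℚ_[p])) hz
  have hl : ((∑ k ∈ range p, ((2 * k).choose k : ℤ_[p]) * (ivp p 2) ^ k * hh (ivp p) k : ℤ_[p]) : ℚ_[p])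
      = ((∑ k ∈ Finset.range p, ((2 * k).choose k : ℚ) / 2 ^ k * H k : ℚ) : ℚ_[p]) := by
    rw [PadicInt.coe_sum, Rat.cast_sum]
    apply Finset.sum_congr rfl
    intro k hk
    have hk' := mem_range.mp hk
    rw [PadicInt.coe_mul, PadicInt.coe_mul, PadicInt.coe_pow, hh_coe k (by omega),
      ivp_coe 2 (by omega) (by omega)]
    push_cast
    rw [inv_pow]
    rfl
  replace h := hl.symm.trans h
  rw [Rat.cast_sub, h, ← eZ_cast]
  push_cast
  rw [hh_coe q (by omega), ivp_coe 2 (by omega) (by omega)]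
  push_cast
  ring
end

section
/- Let p > 3 be a prime. Then ∑_{k=1}^{p-1} (C(2k,k)/4^k) · H_k ≡ 2 − 2p + 4p²·q_p(2) (mod p³), where q_p(2) = (2^{p-1} − 1)/p. -/
theorem aux_sum (n : ℕ) : ∑ k ∈ Finset.Icc 1 n, ((2 * k).choose k : ℚ) / 4 ^ k * H k =
    2 + 2 * (n + 1) * ((2 * (n + 1)).choose (n + 1) : ℚ) / 4 ^ (n + 1) * (H n - 2) := by
  induction n with
  | zero => simp [H]; norm_num [Nat.choose]
  | succ n ih =>
    rw [Finset.sum_Icc_succ_top (by omega), ih]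
    have hH : H (n + 1) = H n + 1 / ((n : ℚ) + 1) := by
      unfold H; rw [Finset.sum_Icc_succ_top (by omega)]; push_cast; rfl
    have hc : ((n : ℚ) + 1 + 1) * ((2 * (n + 1 + 1)).choose (n + 1 + 1) : ℚ) =
        2 * (2 * ((n : ℚ) + 1) + 1) * ((2 * (n + 1)).choose (n + 1) : ℚ) := by
      have := Nat.succ_mul_centralBinom_succ (n + 1)
      unfold Nat.centralBinom at this
      exact_mod_cast this
    rw [hH]
    push_cast
    have e : 2 * ((n : ℚ) + 1 + 1) * ((2 * (n + 1 + 1)).choose (n + 1 + 1) : ℚ) =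
      4 * (2 * ((n : ℚ) + 1) + 1) * ((2 * (n + 1)).choose (n + 1) : ℚ) := by linarith
    rw [e]
    have : (n : ℚ) + 1 ≠ 0 := by positivity
    generalize ((2 * (n + 1)).choose (n + 1) : ℚ) = c
    rw [pow_succ _ (n + 1)]
    field_simp
    ring

theorem aux_choose (p : ℕ) (hp : p.Prime) : ∃ c : ℤ, ((2 * p).choose p : ℤ) = 2 + p ^ 2 * c := by
  have h := Nat.add_choose_eq p p p
  rw [Finset.Nat.sum_antidiagonal_eq_sum_range_succ_mk, Finset.sum_range_succ,
    ← Nat.sub_add_cancel hp.one_le, Finset.sum_range_succ', Nat.sub_add_cancel hp.one_le] at h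
  have hd : p ^ 2 ∣ ∑ k ∈ Finset.range (p - 1), p.choose (k + 1) * p.choose (p - (k + 1)) := by
    apply Finset.dvd_sum
    intro k hk
    rw [Finset.mem_range] at hk
    rw [pow_two]
    exact mul_dvd_mul (hp.dvd_choose_self (by omega) (by omega))
      (hp.dvd_choose_self (by omega) (by omega))
  obtain ⟨c, hc⟩ := hd
  refine ⟨c, ?_⟩
  simp only [hc] at h
  simp at h
  rw [two_mul, h]
  push_cast
  ring

theorem aux_wol (p : ℕ) (hp : p.Prime) (hp3 : 3 < p) :
    ∃ t : ℤ, 2 * ((p - 1).factorial : ℚ) ^ 2 * H (p - 1) = p ^ 2 * t := by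
  haveI : Fact p.Prime := ⟨hp⟩
  set F := (p - 1).factorial with hF
  let u : ℕ → ℕ := fun k => F / k
  have hu : ∀ k, 1 ≤ k → k ≤ p - 1 → u k * k = F := fun k h1 h2 =>
    Nat.div_mul_cancel (Nat.dvd_factorial h1 h2)
  have hz : ((∑ k ∈ Finset.Icc 1 (p - 1), u k * u (p - k) : ℕ) : ZMod p) = 0 := by
    have h0 : ∑ x : ZMod p, x ^ (p - 3) = 0 := by
      apply FiniteField.sum_pow_lt_card_sub_one
      rw [ZMod.card]; omega
    have h1 : ∑ x : ZMod p, x ^ (p - 3) = ∑ k ∈ Finset.Icc 1 (p - 1), (k : ZMod p) ^ (p - 3) := by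
      have : ∑ x : ZMod p, x ^ (p - 3) = ∑ k ∈ Finset.range p, (k : ZMod p) ^ (p - 3) := by
        symm
        apply Finset.sum_bij (fun (k : ℕ) _ => (k : ZMod p))
        · simp
        · intro a ha b hb hab
          rw [Finset.mem_range] at ha hb
          have := congrArg ZMod.val hab
          rwa [ZMod.val_natCast_of_lt ha, ZMod.val_natCast_of_lt hb] at this
        · intro b _
          exact ⟨b.val, Finset.mem_range.2 (ZMod.val_lt b), ZMod.natCast_zmod_val b⟩
        · simp
      rw [this, Finset.range_eq_Ico, Finset.sum_eq_sum_Ico_succ_bot hp.pos]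
      have e : Finset.Ico (0 + 1) p = Finset.Icc 1 (p - 1) := by
        ext x; simp; omega
      rw [e]
      simp
      omega
    have h2 : ∀ k ∈ Finset.Icc 1 (p - 1), ((u k * u (p - k) : ℕ) : ZMod p)
        = -(F : ZMod p) ^ 2 * (k : ZMod p) ^ (p - 3) := by
      intro k hk
      rw [Finset.mem_Icc] at hk
      have hk0 : (k : ZMod p) ≠ 0 := by
        rw [Ne, ZMod.natCast_eq_zero_iff]
        exact Nat.not_dvd_of_pos_of_lt (by omega) (by omega)
      have e1 : (u k : ZMod p) * k = F := by exact_mod_cast congrArg (Nat.cast (R := ZMod p)) (hu k hk.1 hk.2)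
      have e2 : (u (p - k) : ZMod p) * (-k) = F := by
        have := congrArg (Nat.cast (R := ZMod p)) (hu (p - k) (by omega) (by omega))
        rw [Nat.cast_mul, Nat.cast_sub (by omega)] at this
        simpa using this
      have e3 : (k : ZMod p) ^ (p - 3) * k ^ 2 = 1 := by
        rw [← pow_add, show p - 3 + 2 = p - 1 by omega]
        exact ZMod.pow_card_sub_one_eq_one hk0
      apply mul_right_cancel₀ (pow_ne_zero 2 hk0)
      rw [mul_assoc, e3, ← e1]
      push_cast
      have e4 := e1.trans e2.symm
      linear_combination (u k : ZMod p) * k * e4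
    rw [Nat.cast_sum, Finset.sum_congr rfl h2, ← Finset.mul_sum, ← h1, h0, mul_zero]
  rw [ZMod.natCast_eq_zero_iff] at hz
  obtain ⟨t, ht⟩ := hz
  refine ⟨t, ?_⟩
  have hrefl : H (p - 1) = ∑ k ∈ Finset.Icc 1 (p - 1), (1 : ℚ) / ((p - k : ℕ) : ℚ) := by
    unfold H
    apply Finset.sum_bij' (fun k _ => p - k) (fun k _ => p - k)
    · intro a ha; simp at ha ⊢; omega
    · intro a ha; simp at ha ⊢; omega
    · intro a ha; simp at ha ⊢; omega
    · intro a ha; simp at ha ⊢; omega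
    · intro a ha
      simp only [Finset.mem_Icc] at ha
      rw [show p - (p - a) = a by omega]
  have hs : 2 * (F : ℚ) ^ 2 * H (p - 1) =
      p * ((∑ k ∈ Finset.Icc 1 (p - 1), u k * u (p - k) : ℕ) : ℚ) := by
    have : 2 * (F : ℚ) ^ 2 * H (p - 1) = (F : ℚ) ^ 2 * (H (p - 1) + H (p - 1)) := by ring
    rw [this]
    nth_rewrite 2 [hrefl]
    unfold H
    rw [← Finset.sum_add_distrib, Finset.mul_sum, Nat.cast_sum, Finset.mul_sum]
    apply Finset.sum_congr rfl
    intro k hk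
    rw [Finset.mem_Icc] at hk
    have e1 : (u k : ℚ) * k = F := by exact_mod_cast hu k hk.1 hk.2
    have e2 : (u (p - k) : ℚ) * ((p - k : ℕ) : ℚ) = F := by
      exact_mod_cast hu (p - k) (by omega) (by omega)
    have e3 : (p : ℚ) = k + ((p - k : ℕ) : ℚ) := by
      have : p = k + (p - k) := by omega
      exact_mod_cast this
    have k1 : (k : ℚ) ≠ 0 := by have : k ≠ 0 := by omega
                                exact_mod_cast this
    have k2 : ((p - k : ℕ) : ℚ) ≠ 0 := by have : p - k ≠ 0 := by omega
                                          exact_mod_cast this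
    have e4 : (F : ℚ) ^ 2 = (u k * k) * (u (p - k) * ((p - k : ℕ) : ℚ)) := by rw [e1, e2]; ring
    rw [e4, e3]
    push_cast
    field_simp
    ring
  rw [hs, ht]
  push_cast
  ring

theorem stmt4 (p : ℕ) (hp : p.Prime) (hp3 : 3 < p) :
    ratModEq (p ^ 3) (∑ k ∈ Finset.Icc 1 (p - 1), ((2 * k).choose k : ℚ) / 4 ^ k * H k)
      (2 - 2 * p + 4 * p ^ 2 * (((2 : ℚ) ^ (p - 1) - 1) / p)) := by
  haveI : Fact p.Prime := ⟨hp⟩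
  have hp0 : (p : ℚ) ≠ 0 := by exact_mod_cast hp.ne_zero
  obtain ⟨c, hc⟩ := aux_choose p hp
  obtain ⟨t, ht⟩ := aux_wol p hp hp3
  have h2 : ¬ (p : ℤ) ∣ 2 := by
    intro h
    have := Int.le_of_dvd (by norm_num) h
    omega
  obtain ⟨q, hq⟩ : (p : ℤ) ∣ 2 ^ (p - 1) - 1 := by
    rw [← ZMod.intCast_zmod_eq_zero_iff_dvd]
    push_cast
    rw [ZMod.pow_card_sub_one_eq_one, sub_self]
    intro h
    apply h2
    rw [← ZMod.intCast_zmod_eq_zero_iff_dvd]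
    exact_mod_cast h
  have hF : ¬ (p : ℤ) ∣ ((p - 1).factorial : ℤ) := by
    rw [Int.natCast_dvd_natCast, hp.dvd_factorial]
    omega
  have hF0 : ((p - 1).factorial : ℚ) ≠ 0 := by exact_mod_cast (Nat.factorial_ne_zero _)
  generalize (p - 1).factorial = F at *
  have hsum := aux_sum (p - 1)
  rw [Nat.sub_add_cancel hp.one_le, show ((p - 1 : ℕ) : ℚ) + 1 = p by
    rw [Nat.cast_sub hp.one_le]; simp] at hsum
  have h4 : (4 : ℚ) ^ p = 4 * (2 ^ (p - 1)) ^ 2 := by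
    rw [← pow_mul, mul_comm (p - 1), pow_mul]
    norm_num
    rw [← pow_succ', Nat.sub_add_cancel hp.one_le]
  have hcQ : ((2 * p).choose p : ℚ) = 2 + p ^ 2 * c := by exact_mod_cast hc
  have hqQ : (2 : ℚ) ^ (p - 1) - 1 = p * q := by exact_mod_cast hq
  have hHQ : H (p - 1) = p ^ 2 * t / (2 * F ^ 2) := by
    rw [← ht]; field_simp
  have hm0 : (2 : ℚ) ^ (p - 1) ≠ 0 := by positivity
  have hm : ((2 : ℤ) ^ (p - 1) : ℤ) = 1 + p * q := by linarith
  have hmQ : (2 : ℚ) ^ (p - 1) = 1 + p * q := by linarith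
  rw [hsum, h4, hcQ, hqQ, hHQ]
  unfold ratModEq
  have hpm : ¬ (p : ℤ) ∣ 2 ^ (p - 1) := fun h => h2 ((Nat.prime_iff_prime_int.1 hp).dvd_of_dvd_pow h)
  rw [hmQ] at hm0 ⊢
  rw [hm] at hpm
  set x : ℚ := _ - _ with hx
  have key : x * ((4 * (1 + p * q) ^ 2 * F ^ 2 : ℤ) : ℚ) =
      ((p ^ 3 * ((2 + p ^ 2 * c) * t + 4 * F ^ 2 * (-c - 6 * q ^ 2 - 4 * p * q ^ 3)) : ℤ) : ℚ) := by
    rw [hx]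
    push_cast
    field_simp
    ring
  generalize hB : (4 * (1 + p * q) ^ 2 * F ^ 2 : ℤ) = B at key
  generalize ((2 + p ^ 2 * c) * t + 4 * F ^ 2 * (-c - 6 * q ^ 2 - 4 * p * q ^ 3) : ℤ) = A at key
  have hpp := Nat.prime_iff_prime_int.1 hp
  have hpB : ¬ (p : ℤ) ∣ B := by
    rw [← hB]
    intro h
    rcases hpp.dvd_or_dvd h with h | h
    · rcases hpp.dvd_or_dvd h with h | h
      · rw [show (4 : ℤ) = 2 ^ 2 by norm_num] at h
        exact h2 (hpp.dvd_of_dvd_pow h)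
      · exact hpm (hpp.dvd_of_dvd_pow h)
    · exact hF (hpp.dvd_of_dvd_pow h)
  have key2 : x.num * B = p ^ 3 * (A * x.den) := by
    have hd : (x.den : ℚ) ≠ 0 := by exact_mod_cast x.den_nz
    have hx' : x * x.den = x.num := Rat.mul_den_eq_num x
    have : (x.num : ℚ) * B = p ^ 3 * (A * x.den) := by
      rw [← hx']
      push_cast at key
      linear_combination (x.den : ℚ) * key
    exact_mod_cast this
  push_cast
  have hcop : IsCoprime ((p : ℤ) ^ 3) B := by
    apply IsCoprime.pow_left
    exact (Prime.coprime_iff_not_dvd hpp).2 hpB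
  exact hcop.dvd_of_dvd_mul_right ⟨_, key2⟩
end

section
/- Let p be an odd prime. Then ∑_{k=0}^{(p-1)/2} (C(2k,k)/4^k) · H_k^{(2)} ≡ −4·q_p(2) (mod p), where q_p(2) = (2^{p-1} − 1)/p. -/
/-- `C(2k,k)/4^k`. -/
def uu (k : ℕ) : ℚ := ((2 * k).choose k : ℚ) / 4 ^ k

lemma uu_succ (k : ℕ) : 2 * ((k : ℚ) + 1) * uu (k + 1) = (2 * k + 1) * uu k := by
  have h := Nat.succ_mul_centralBinom_succ k
  have h' : ((k : ℚ) + 1) * ((2 * (k + 1)).choose (k + 1) : ℚ)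
      = 2 * (2 * k + 1) * ((2 * k).choose k : ℚ) := by
    rw [Nat.centralBinom_eq_two_mul_choose, Nat.centralBinom_eq_two_mul_choose] at h
    exact_mod_cast h
  unfold uu
  rw [pow_succ]
  field_simp
  linarith

lemma H2_succ (n : ℕ) : H2 (n + 1) = H2 n + 1 / ((n : ℚ) + 1) ^ 2 := by
  unfold H2
  rw [Finset.sum_Icc_succ_top (by omega)]
  push_cast
  rfl

lemma H_succ (n : ℕ) : H (n + 1) = H n + 1 / ((n : ℚ) + 1) := by
  unfold H
  rw [Finset.sum_Icc_succ_top (by omega)]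
  push_cast
  rfl

lemma idA (n : ℕ) : ∑ k ∈ Finset.range (n + 1), uu k * H2 k
    = (2 * n + 1) * uu n * H2 n - 2 * ∑ j ∈ Finset.range n, uu (j + 1) / ((j : ℚ) + 1) := by
  induction n with
  | zero => simp [H2]
  | succ n ih =>
    rw [Finset.sum_range_succ, ih, Finset.sum_range_succ _ n, ← uu_succ, H2_succ]
    have : (n : ℚ) + 1 ≠ 0 := by positivity
    push_cast
    field_simp
    ring

lemma choose_div (n j : ℕ) : (n.choose j : ℚ) / ((j : ℚ) + 1)
    = ((n + 1).choose (j + 1) : ℚ) / ((n : ℚ) + 1) := by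
  have h : ((n : ℚ) + 1) * (n.choose j : ℚ) = ((n + 1).choose (j + 1) : ℚ) * ((j : ℚ) + 1) := by
    exact_mod_cast Nat.add_one_mul_choose_eq n j
  have h1 : (n : ℚ) + 1 ≠ 0 := by positivity
  have h2 : (j : ℚ) + 1 ≠ 0 := by positivity
  field_simp
  linarith

lemma idB0 (n : ℕ) : ∑ j ∈ Finset.range (n + 1), (-1 : ℚ) ^ j * ((n + 1).choose (j + 1) : ℚ) = 1 := by
  have h := Int.alternating_sum_range_choose (n := n + 1)
  rw [Finset.sum_range_succ'] at h
  simp only [pow_succ] at h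
  have h' : (∑ j ∈ Finset.range (n + 1), (-1 : ℤ) ^ j * ((n + 1).choose (j + 1) : ℤ)) = 1 := by
    simp at h
    linarith
  exact_mod_cast h'

lemma idB (n : ℕ) : ∑ j ∈ Finset.range n, (-1 : ℚ) ^ j * (n.choose (j + 1) : ℚ) / ((j : ℚ) + 1)
    = H n := by
  induction n with
  | zero => simp [H]
  | succ n ih =>
    have e : ∑ j ∈ Finset.range (n + 1), (-1 : ℚ) ^ j * (n.choose (j + 1) : ℚ) / ((j : ℚ) + 1)
      = H n := by
      rw [Finset.sum_range_succ, ih]; simp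
    have e2 : ∑ j ∈ Finset.range (n + 1), (-1 : ℚ) ^ j * ((n.choose j : ℚ) / ((j : ℚ) + 1))
      = 1 / ((n : ℚ) + 1) := by
      have h0 := congrArg (fun x : ℚ => x / ((n : ℚ) + 1)) (idB0 n)
      rw [← h0, Finset.sum_div]
      refine Finset.sum_congr rfl fun j _ => ?_
      rw [choose_div, mul_div_assoc]
    rw [H_succ, ← e, ← e2, ← Finset.sum_add_distrib]
    refine Finset.sum_congr rfl fun j _ => ?_
    rw [Nat.choose_succ_succ]
    push_cast
    ring

lemma idD (n : ℕ) : ∑ j ∈ Finset.range (2 * n), (-1 : ℚ) ^ j / ((j : ℚ) + 1)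
    = H (2 * n) - H n := by
  induction n with
  | zero => simp [H]
  | succ n ih =>
    rw [show 2 * (n + 1) = 2 * n + 1 + 1 by ring, Finset.sum_range_succ, Finset.sum_range_succ, ih,
      H_succ, H_succ, H_succ]
    have : (n : ℚ) + 1 ≠ 0 := by positivity
    rw [pow_succ, pow_mul]
    push_cast
    norm_num
    field_simp
    ring

section
variable {p : ℕ} [hp : Fact p.Prime]

lemma M_add {x y : ℚ} (hx : padicNorm p x < 1) (hy : padicNorm p y < 1) :
    padicNorm p (x + y) < 1 := lt_of_le_of_lt padicNorm.nonarchimedean (max_lt hx hy)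

lemma M_mul {x y : ℚ} (hx : padicNorm p x < 1) (hy : padicNorm p y ≤ 1) :
    padicNorm p (x * y) < 1 := by
  rw [padicNorm.mul]
  exact mul_lt_one_of_nonneg_of_lt_one_left (padicNorm.nonneg _) hx hy

lemma I_mul {x y : ℚ} (hx : padicNorm p x ≤ 1) (hy : padicNorm p y ≤ 1) :
    padicNorm p (x * y) ≤ 1 := by
  rw [padicNorm.mul]
  exact mul_le_one₀ hx (padicNorm.nonneg _) hy

lemma M_sum {s : Finset ℕ} {f : ℕ → ℚ} (h : ∀ i ∈ s, padicNorm p (f i) < 1) :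
    padicNorm p (∑ i ∈ s, f i) < 1 := padicNorm.sum_lt' h one_pos

lemma I_sum {s : Finset ℕ} {f : ℕ → ℚ} (h : ∀ i ∈ s, padicNorm p (f i) ≤ 1) :
    padicNorm p (∑ i ∈ s, f i) ≤ 1 := padicNorm.sum_le' h zero_le_one

lemma N_unit {k : ℕ} (h0 : 0 < k) (hk : k < p) : padicNorm p (k : ℚ) = 1 := by
  rw [padicNorm.nat_eq_one_iff]
  exact Nat.not_dvd_of_pos_of_lt h0 hk

lemma N_inv {k : ℕ} (hk : k + 1 < p) : padicNorm p (((k : ℚ) + 1)⁻¹) ≤ 1 := by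
  have := N_unit (p := p) (Nat.succ_pos k) hk
  push_cast at this
  rw [← one_div, padicNorm.div, this]
  simp

lemma N_p : padicNorm p (p : ℚ) < 1 := padicNorm.padicNorm_p_lt_one_of_prime

lemma N_two (h : 2 < p) : padicNorm p ((2 : ℚ)⁻¹) ≤ 1 := by
  have := N_inv (p := p) (k := 1) h
  norm_num at this ⊢
  exact this

lemma choose_M (j : ℕ) (hj : j < p) :
    padicNorm p (((p - 1).choose j : ℚ) - (-1) ^ j) < 1 := by
  induction j with
  | zero => simp
  | succ j ih =>
    have h1 : ((p - 1).choose j : ℚ) + ((p - 1).choose (j + 1) : ℚ)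
        = p * ((p - 1).choose j / ((j : ℚ) + 1)) := by
      have h := choose_div (p - 1) j
      have e : p - 1 + 1 = p := by omega
      have e' : ((p - 1 : ℕ) : ℚ) + 1 = p := by exact_mod_cast e
      rw [h, e', e]
      have : (p : ℚ) ≠ 0 := by exact_mod_cast hp.out.ne_zero
      field_simp
      have := Nat.choose_succ_succ (p - 1) j
      simp only [Nat.succ_eq_add_one, e] at this
      exact_mod_cast this.symm
    have h2 : ((p - 1).choose (j + 1) : ℚ) - (-1) ^ (j + 1)
      = p * ((p - 1).choose j * ((j : ℚ) + 1)⁻¹) + (((p - 1).choose j : ℚ) - (-1) ^ j) * (-1 : ℤ) := by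
      rw [← div_eq_mul_inv, ← h1, pow_succ]
      push_cast
      ring
    rw [h2]
    exact M_add (M_mul N_p (I_mul (padicNorm.of_nat _) (N_inv hj)))
      (M_mul (ih (by omega)) (padicNorm.of_int _))

lemma uu_M (n : ℕ) (hn : p = 2 * n + 1) (j : ℕ) (hj : j ≤ n) :
    padicNorm p (uu j - (-1) ^ j * (n.choose j : ℚ)) < 1 := by
  induction j with
  | zero => simp [uu]
  | succ j ih =>
    have h1 : (n.choose (j + 1) : ℚ) * ((j : ℚ) + 1) = n.choose j * ((n : ℚ) - j) := by
      have := Nat.choose_succ_right_eq n j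
      have h := congrArg (Nat.cast (R := ℚ)) this
      push_cast [Nat.cast_sub (show j ≤ n by omega)] at h
      exact h
    have h0 : (j : ℚ) + 1 ≠ 0 := by positivity
    have h2 := uu_succ j
    have hp' : (p : ℚ) = 2 * n + 1 := by exact_mod_cast hn
    have h3 : uu (j + 1) - (-1) ^ (j + 1) * (n.choose (j + 1) : ℚ)
      = (uu j - (-1) ^ j * (n.choose j : ℚ)) * (((2 * j + 1 : ℕ) : ℚ) * (2⁻¹ * ((j : ℚ) + 1)⁻¹))
        + p * (((-1 : ℤ) ^ j * n.choose j : ℤ) * (2⁻¹ * ((j : ℚ) + 1)⁻¹)) := by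
      have e1 : uu (j + 1) = (2 * j + 1) * uu j / (2 * ((j : ℚ) + 1)) := by
        rw [← h2]; field_simp
      have e2 : (n.choose (j + 1) : ℚ) = n.choose j * ((n : ℚ) - j) / ((j : ℚ) + 1) := by
        rw [← h1]; field_simp
      rw [e1, e2, hp', pow_succ]
      push_cast
      field_simp
      ring
    rw [h3]
    have hI : padicNorm p (2⁻¹ * ((j : ℚ) + 1)⁻¹) ≤ 1 :=
      I_mul (N_two (by omega)) (N_inv (by omega))
    exact M_add (M_mul (ih (by omega)) (I_mul (padicNorm.of_nat _) hI))
      (M_mul N_p (I_mul (padicNorm.of_int _) hI))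

lemma H_eq_range (n : ℕ) : H n = ∑ j ∈ Finset.range n, ((j : ℚ) + 1)⁻¹ := by
  induction n with
  | zero => simp [H]
  | succ n ih => rw [H_succ, Finset.sum_range_succ, ih, one_div]

lemma H_M (n : ℕ) (hn : p = 2 * n + 1) (h : 2 < p) : padicNorm p (H (2 * n)) < 1 := by
  have hp' : (p : ℚ) = 2 * n + 1 := by exact_mod_cast hn
  have e : H (2 * n) = (∑ j ∈ Finset.range (2 * n),
      (p : ℚ) * (((j : ℚ) + 1)⁻¹ * (((2 * n - 1 - j : ℕ) : ℚ) + 1)⁻¹)) * 2⁻¹ := by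
    have e1 : H (2 * n) = ∑ j ∈ Finset.range (2 * n), (((2 * n - 1 - j : ℕ) : ℚ) + 1)⁻¹ := by
      rw [H_eq_range, ← Finset.sum_range_reflect]
    have e2 : H (2 * n) + H (2 * n) = ∑ j ∈ Finset.range (2 * n),
      (p : ℚ) * (((j : ℚ) + 1)⁻¹ * (((2 * n - 1 - j : ℕ) : ℚ) + 1)⁻¹) := by
      nth_rw 2 [e1]
      rw [H_eq_range, ← Finset.sum_add_distrib]
      refine Finset.sum_congr rfl fun j hj => ?_
      have hj' := Finset.mem_range.mp hj
      have a : (p : ℚ) = ((j : ℚ) + 1) + (((2 * n - 1 - j : ℕ) : ℚ) + 1) := by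
        have : p = (j + 1) + ((2 * n - 1 - j) + 1) := by omega
        exact_mod_cast this
      have h1 : (j : ℚ) + 1 ≠ 0 := by positivity
      have h2 : ((2 * n - 1 - j : ℕ) : ℚ) + 1 ≠ 0 := by positivity
      rw [a]
      field_simp
      ring
    rw [← e2]; ring
  rw [e]
  refine M_mul (M_sum fun j hj => ?_) (N_two h)
  have hj' := Finset.mem_range.mp hj
  exact M_mul N_p (I_mul (N_inv (by omega)) (N_inv (by omega)))

lemma q_eq (n : ℕ) (hn : p = 2 * n + 1) :
    2 * (((2 : ℚ) ^ (p - 1) - 1) / p)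
      = ∑ j ∈ Finset.range (2 * n), ((p - 1).choose j : ℚ) * ((j : ℚ) + 1)⁻¹ := by
  have hp0 : (p : ℚ) ≠ 0 := by exact_mod_cast hp.out.ne_zero
  have hp' : (p : ℚ) = 2 * n + 1 := by exact_mod_cast hn
  have h := Nat.sum_range_choose (2 * n + 1)
  rw [Finset.sum_range_succ, Finset.sum_range_succ'] at h
  have h' := congrArg (Nat.cast (R := ℚ)) h
  push_cast at h'
  simp only [Nat.choose_zero_right, Nat.choose_self, pow_succ, Nat.cast_one] at h'
  have e : ∑ j ∈ Finset.range (2 * n), ((p - 1).choose j : ℚ) * ((j : ℚ) + 1)⁻¹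
    = (∑ j ∈ Finset.range (2 * n), ((2 * n + 1).choose (j + 1) : ℚ)) / p := by
    rw [Finset.sum_div]
    refine Finset.sum_congr rfl fun j hj => ?_
    rw [← div_eq_mul_inv, choose_div, show p - 1 = 2 * n by omega, hp']
    push_cast
    rfl
  rw [e, show p - 1 = 2 * n by omega]
  field_simp
  linarith

lemma dvd_of_M {x : ℚ} (h : padicNorm p x < 1) : (p : ℤ) ∣ x.num := by
  have e : (x.num : ℚ) = x * (x.den : ℤ) := by simp [Rat.mul_den_eq_num]
  rw [← padicNorm.int_lt_one_iff, e]
  exact M_mul h (padicNorm.of_int _)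

end

theorem stmt5 (p : ℕ) (hp : p.Prime) (hodd : Odd p) :
    ratModEq p
      (∑ k ∈ Finset.range ((p - 1) / 2 + 1), ((2 * k).choose k : ℚ) / 4 ^ k * H2 k)
      (-4 * (((2 : ℚ) ^ (p - 1) - 1) / p)) := by
  haveI : Fact p.Prime := ⟨hp⟩
  obtain ⟨n, hn⟩ := hodd
  have hp2 : 2 < p := by have := hp.two_le; omega
  have hp' : (p : ℚ) = 2 * n + 1 := by exact_mod_cast hn
  apply dvd_of_M
  have hA := idA n
  unfold uu at hA
  rw [show (p - 1) / 2 = n by omega, hA]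
  set q := ((2 : ℚ) ^ (p - 1) - 1) / p with hq
  have hQ : 2 * q = _ := q_eq n hn
  have h1 : padicNorm p (2 * q - (H (2 * n) - H n)) < 1 := by
    rw [hQ, ← idD, ← Finset.sum_sub_distrib]
    refine M_sum fun j hj => ?_
    have hj' := Finset.mem_range.mp hj
    rw [div_eq_mul_inv, ← sub_mul]
    exact M_mul (choose_M j (by omega)) (N_inv (by omega))
  have h2 : padicNorm p ((∑ j ∈ Finset.range n, uu (j + 1) / ((j : ℚ) + 1)) + H n) < 1 := by
    rw [← idB, ← Finset.sum_add_distrib]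
    refine M_sum fun j hj => ?_
    have hj' := Finset.mem_range.mp hj
    have := uu_M n hn (j + 1) (by omega)
    have e : uu (j + 1) / ((j : ℚ) + 1) + (-1 : ℚ) ^ j * (n.choose (j + 1) : ℚ) / ((j : ℚ) + 1)
      = (uu (j + 1) - (-1) ^ (j + 1) * (n.choose (j + 1) : ℚ)) * ((j : ℚ) + 1)⁻¹ := by
      rw [pow_succ]; ring
    rw [e]
    exact M_mul this (N_inv (by omega))
  have h3 : padicNorm p ((p : ℚ) * (uu n * H2 n)) < 1 := by
    refine M_mul N_p (I_mul ?_ ?_)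
    · have : uu n = ((2 * n).choose n : ℕ) * (2⁻¹) ^ (2 * n) := by
        unfold uu
        rw [pow_mul, div_eq_mul_inv, ← inv_pow]
        norm_num
      rw [this]
      refine I_mul (padicNorm.of_nat _) ?_
      generalize 2 * n = m
      induction m with
      | zero => simp
      | succ m ih => rw [pow_succ]; exact I_mul ih (N_two hp2)
    · unfold H2
      refine I_sum fun k hk => ?_
      have hk' := Finset.mem_Icc.mp hk
      have : (1 : ℚ) / k ^ 2 = (((k - 1 : ℕ) : ℚ) + 1)⁻¹ * (((k - 1 : ℕ) : ℚ) + 1)⁻¹ := by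
        have : ((k - 1 : ℕ) : ℚ) + 1 = k := by
          have : k - 1 + 1 = k := by omega
          exact_mod_cast this
        rw [this, one_div, pow_two, mul_inv]
      rw [this]
      exact I_mul (N_inv (by omega)) (N_inv (by omega))
  have h4 := H_M n hn hp2
  have key : (p : ℚ) * (uu n * H2 n)
      + ((∑ j ∈ Finset.range n, uu (j + 1) / ((j : ℚ) + 1)) + H n) * (-2 : ℤ)
      + (2 * q - (H (2 * n) - H n)) * (2 : ℤ) + H (2 * n) * (2 : ℤ) ∈ {x | padicNorm p x < 1} :=
    M_add (M_add (M_add h3 (M_mul h2 (padicNorm.of_int _))) (M_mul h1 (padicNorm.of_int _)))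
      (M_mul h4 (padicNorm.of_int _))
  have key' : padicNorm p _ < 1 := key
  convert key' using 2
  rw [hp']
  unfold uu
  push_cast
  ring
end
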